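/- Let k be a field, ℓ ≥ 1 an integer, U = (U₁, …, U_ℓ) indeterminates, and F(U, Y) a polynomial in Y of degree n with coefficients in the polynomial ring k[U₁, …, U_ℓ], such that the Galois group of F over k̄(U₁, …, U_ℓ) has cardinality n! (i.e., F has Galois group S_n over k̄(U)), where k̄ is an algebraic closure of k and k̄(U) is the fraction field of k̄[U₁, …, U_ℓ]. Then the set of ℓ-tuples (u₁(T), …, u_ℓ(T)) ∈ k[T]^ℓ such that the specialized polynomial F(u₁(T), …, u_ℓ(T), Y) has degree n in Y and Galois group of cardinality n! over k̄(T) is infinite. -/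

import Mathlib

/-!
The indeterminates are specialized one at a time. Let `M_m = k̄(U₁, …, U_m)` inside `k̄(U)`. Over
`k̄(U)(x)`, with `x` a new variable, the group of `F` is still of order `n!`
(`card_gal_le_ratFunc`). Suppose `U_{m+1}, …, U_ℓ` have been replaced by polynomials in `k[x]`.
With `κ = M_m`, the polynomial `F` has coefficients in `κ[x][U_{m+1}]`, and the task is to replace
`U_{m+1}` by some `u ∈ k[x]` keeping the degree and the order of the group over `κ(x)`
(`exists_specialization`, `tower_step`, `exists_tower`). After `ℓ` steps the base is `k̄(x)`. The
degree of the first polynomial chosen can be made arbitrarily large, so there are infinitely many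
tuples.

One step is Hilbert's irreducibility argument over `A = κ[x][U]`. To each proper subgroup `H` of
the Galois group `G` one attaches an element `θ_H`, integral over `A`, fixed by `H`, and not in
`Frac A`; its minimal polynomial `P_H` has no root in `Frac A` (`exists_hilbert_data`). Let `𝔭` be
the kernel of `U ↦ u`, and suppose that finitely many nonzero elements of `A` stay outside `𝔭` and
that no `P_H(u, ·)` has a root in `κ[x]`. If the decomposition group `H` of a prime above `𝔭` were
proper, the residue class of `θ_H` would be a separable element fixed by all automorphisms of the
residue field extension, hence a root of `P_H(u, ·)` in `κ[x]`; so the decomposition group is `G`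
(`stabilizer_eq_top`), and `G` acts faithfully on the roots of the specialized polynomial
(`card_le_card_gal_specialize`).

The existence of `u` (`exists_good_specialization`) holds in every characteristic. One takes
`u_j = u₀ + g ^ (4 t) x ^ j` for `0 ≤ j ≤ t`, with `g ∈ k[x]` nonconstant and coprime to the
relevant values at `u₀`, and shows that the number of `j` for which `P(u_j, ·)` has a root
`w_j ∈ κ[x]` is bounded independently of `t`. Modulo the radical of `g` there are finitely many
classes of such roots. The roots of one class are values, modulo a high power of `g`, of a single
Hensel lift `W(U)` (`hensel_approx`). A dimension count gives a pair `(A, B) ≠ 0` with `A + W B`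
divisible by a large power of `g` at all `u_j` (`exists_pade`). Comparing degrees,
`A(u_j) + w_j B(u_j) = 0` (`pade_vanish`). As `P` has no root in `Frac A`, the elimination of `w_j`
gives a nonzero polynomial in `U` of bounded degree with the roots `u_j` (`exists_card_bound`).
-/

open Polynomial

/-! ### Hensel lifts and Padé approximation -/

/-- Roots `w` of `P(u, ·)`, for `u` close to `u₁` in the `g`-adic sense and `w` congruent to the
simple root `w₁` of `P(u₁, ·)` modulo the radical of `g`, are the values at `u - u₁` of one
polynomial `Wt`, up to `g ^ (r * L)`. Here `Wt` is the root over `R[X] / (g ^ r, X) ^ L` lifting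
`w₁` by Hensel's lemma, and the claim is the uniqueness of that lift in `R / (g ^ (r * L))`. -/
theorem hensel_approx {R : Type*} [CommRing R] (g : R) (P : R[X][X]) (u₁ w₁ : R) (r L : ℕ)
    (hroot : (P.map (evalRingHom u₁)).eval w₁ = 0)
    (hcop : IsCoprime g ((derivative (P.map (evalRingHom u₁))).eval w₁)) :
    ∃ Wt : R[X], ∀ (u w : R) (M : ℕ), g ^ r ∣ u - u₁ →
      (P.map (evalRingHom u)).eval w = 0 → g ∣ (w - w₁) ^ M →
      g ^ (r * L) ∣ Wt.eval (u - u₁) - w := by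
  classical
  set J : Ideal R[X] := (Ideal.span {C (g ^ r), X}) ^ L with hJ
  let τ : R[X] →+* R[X] := (compRingHom (X + C u₁))
  have hXJ : (X : R[X]) ^ L ∈ J := Ideal.pow_mem_pow (Ideal.subset_span (by simp)) L
  have hgJ : (C (g ^ r) : R[X]) ^ L ∈ J := Ideal.pow_mem_pow (Ideal.subset_span (by simp)) L
  let mk := Ideal.Quotient.mk J
  let ρ : R[X] →+* R[X] ⧸ J := mk.comp τ
  have hev0 : ∀ u : R, (evalRingHom (u - u₁)).comp τ = evalRingHom u := by
    intro u
    ext <;> simp [τ]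
  -- `X` is nilpotent in the quotient, so an element is determined by its value at `X = 0` up to
  -- nilpotents
  have hXnil : IsNilpotent (mk X) := ⟨L, by rw [← map_pow]; exact Ideal.Quotient.eq_zero_iff_mem.2 hXJ⟩
  have hnil : ∀ q : R[X], IsNilpotent (mk q - mk (C (q.eval 0))) := by
    intro q
    obtain ⟨s, hs⟩ := X_dvd_sub_C (p := q)
    rw [← map_sub, ← coeff_zero_eq_eval_zero, hs, map_mul]
    exact (Commute.all _ _).isNilpotent_mul_right hXnil
  have hmapτ : ∀ Q : R[X][X], ((Q.map τ).eval (C w₁)).eval 0 = (Q.map (evalRingHom u₁)).eval w₁ := by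
    intro Q
    have h := hev0 u₁
    rw [sub_self] at h
    rw [← h, ← Polynomial.map_map, ← coe_evalRingHom, ← eval₂_hom, eval_map]
    simp [eval₂_eq_eval_map]
  set Pt := P.map ρ with hPt
  have haev : ∀ Q : R[X][X], aeval (mk (C w₁)) (Q.map ρ) = mk ((Q.map τ).eval (C w₁)) := by
    intro Q
    rw [coe_aeval_eq_eval, ← Polynomial.map_map, eval_map, eval₂_hom]
  have h1 : IsNilpotent (aeval (mk (C w₁)) Pt) := by
    have := hnil ((P.map τ).eval (C w₁))
    rw [hmapτ, hroot, map_zero, map_zero, sub_zero] at this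
    rwa [hPt, haev]
  have h2 : IsUnit (aeval (mk (C w₁)) (derivative Pt)) := by
    rw [hPt, derivative_map, haev]
    have h := hnil (((derivative P).map τ).eval (C w₁))
    rw [hmapτ, ← derivative_map] at h
    have hu : IsUnit (mk (C ((derivative (P.map (evalRingHom u₁))).eval w₁))) := by
      obtain ⟨a, b, hab⟩ := (hcop.pow_left (m := r * L))
      refine IsUnit.of_mul_eq_one_right (mk (C b)) ?_
      have : mk (C (a * g ^ (r * L) + b * (derivative (P.map (evalRingHom u₁))).eval w₁)) = 1 := by
        rw [hab]; simp
      rw [C_add, C_mul, map_add, map_mul, pow_mul, C_pow,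
        show mk (C (g ^ r) ^ L) = 0 from Ideal.Quotient.eq_zero_iff_mem.2 hgJ] at this
      simpa using this
    have := h.isUnit_add_left_of_commute hu (Commute.all _ _)
    simpa using this
  obtain ⟨W, ⟨hW1, hW2⟩, -⟩ := existsUnique_nilpotent_sub_and_aeval_eq_zero h1 h2
  obtain ⟨Wt, rfl⟩ := Ideal.Quotient.mk_surjective W
  refine ⟨Wt, fun u w M hu hw hM => ?_⟩
  let mk0 := Ideal.Quotient.mk (Ideal.span {g ^ (r * L)})
  have hJ0 : ∀ a ∈ J, (mk0.comp (evalRingHom (u - u₁))) a = 0 := by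
    intro a ha
    have hle : J.map (evalRingHom (u - u₁)) ≤ Ideal.span {g ^ (r * L)} := by
      rw [hJ, Ideal.map_pow, pow_mul, ← Ideal.span_singleton_pow]
      apply Ideal.pow_right_mono
      rw [Ideal.map_span, Ideal.span_le]
      rintro _ ⟨y, hy, rfl⟩
      rcases hy with rfl | rfl
      · simp
      · simpa using Ideal.mem_span_singleton.2 hu
    exact Ideal.Quotient.eq_zero_iff_mem.2 (hle (Ideal.mem_map_of_mem _ ha))
  let ev : R[X] ⧸ J →+* R ⧸ Ideal.span {g ^ (r * L)} := Ideal.Quotient.lift J _ hJ0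
  have hevmk : ∀ a, ev (mk a) = mk0 (a.eval (u - u₁)) := fun a => by
    simp [ev, mk]
  have hevρ : ev.comp ρ = mk0.comp (evalRingHom u) := by
    rw [← hev0 u]
    ext a <;> simp [ρ, hevmk]
  have haev2 : ∀ (y : R[X] ⧸ J) (Q : (R[X] ⧸ J)[X]), ev (aeval y Q) = aeval (ev y) (Q.map ev) := by
    intro y Q
    rw [coe_aeval_eq_eval, coe_aeval_eq_eval, eval_map, eval₂_hom]
  have k1 : IsNilpotent (aeval (mk0 w₁) (Pt.map ev)) := by
    have := h1.map ev
    rwa [haev2, hevmk, eval_C] at this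
  have k2 : IsUnit (aeval (mk0 w₁) (derivative (Pt.map ev))) := by
    have := h2.map ev
    rwa [haev2, hevmk, eval_C, ← derivative_map] at this
  have huniq := (existsUnique_nilpotent_sub_and_aeval_eq_zero k1 k2).unique
    (y₁ := mk0 (Wt.eval (u - u₁))) (y₂ := mk0 w) ⟨?_, ?_⟩ ⟨?_, ?_⟩
  · rw [← Ideal.mem_span_singleton]
    exact Ideal.Quotient.eq.1 huniq
  · have := hW1.map ev
    rwa [map_sub, hevmk, hevmk, eval_C] at this
  · have := congrArg ev hW2
    rwa [haev2, hevmk, map_zero] at this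
  · refine ⟨M * (r * L), ?_⟩
    rw [← map_sub, ← map_pow]
    refine Ideal.Quotient.eq_zero_iff_mem.2 (Ideal.mem_span_singleton.2 ?_)
    rw [pow_mul (w₁ - w)]
    have hM' : g ∣ (w₁ - w) ^ M := by
      rw [← neg_sub, neg_pow]
      exact hM.mul_left _
    exact pow_dvd_pow_of_dvd hM' _
  · rw [hPt, Polynomial.map_map, hevρ, coe_aeval_eq_eval, ← Polynomial.map_map, eval_map, eval₂_hom,
      hw, map_zero]

/-- A Padé approximant `A + Wt * B` at `u₁`, found by counting dimensions over `κ`. Give `U` the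
weight `d = 5 * t * deg g`. The pairs `(A, B)` of weighted degrees below `4 * e * d` and `3 * e * d`
form a space of dimension about `d * (16 + 9) * e ^ 2 / 2`, whereas the divisibility conditions
number about `4 * t * deg g * 25 * e ^ 2 / 2`, which is `4 / 5` of it. -/
theorem exists_pade {κ : Type*} [Field κ] (g : κ[X]) (hg : 0 < g.natDegree) (t e : ℕ)
    (ht : 1 ≤ t) (he : 1 ≤ e) (u₁ : κ[X]) (Wt : κ[X][X]) :
    ∃ A B : κ[X][X], (A ≠ 0 ∨ B ≠ 0) ∧
      (∀ i, (A.coeff i).degree < (5 * t * g.natDegree * (4 * e - i) : ℕ)) ∧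
      (∀ i, (B.coeff i).degree < (5 * t * g.natDegree * (3 * e - i) : ℕ)) ∧
      ∀ l < 5 * e, g ^ (4 * t * (5 * e - l)) ∣ (taylor u₁ A + Wt * taylor u₁ B).coeff l := by
  classical
  set D := g.natDegree
  let d := 5 * t * D
  let V (m : ℕ) := (i : Fin m) → degreeLT κ (d * (m - i))
  let T := (l : Fin (5 * e)) → κ[X] ⧸ Ideal.span {g ^ (4 * t * (5 * e - l))}
  let Φ (m : ℕ) : V m →ₗ[κ] κ[X][X] :=
    { toFun := fun a => ∑ i : Fin m, monomial (i : ℕ) (a i : κ[X])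
      map_add' := by
        intro a b
        rw [← Finset.sum_add_distrib]
        exact Finset.sum_congr rfl fun i _ => map_add (monomial (i : ℕ)) (a i : κ[X]) (b i)
      map_smul' := by
        intro c a
        rw [RingHom.id_apply, Finset.smul_sum]
        exact Finset.sum_congr rfl fun i _ => (smul_monomial c (i : ℕ) (a i : κ[X])).symm }
  have hΦ : ∀ m (a : V m) (i : ℕ), (Φ m a).coeff i = if h : i < m then (a ⟨i, h⟩ : κ[X]) else 0 := by
    intro m a i
    simp only [Φ, LinearMap.coe_mk, AddHom.coe_mk, finsetSum_coeff, coeff_monomial]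
    split_ifs with h
    · rw [Finset.sum_eq_single ⟨i, h⟩]
      · simp
      · intro b _ hb
        rw [if_neg]
        intro h'
        exact hb (Fin.ext h')
      · simp
    · apply Finset.sum_eq_zero
      intro b _
      rw [if_neg]
      have := b.2
      omega
  have hΦdeg : ∀ m (a : V m) (i : ℕ), ((Φ m a).coeff i).degree < (d * (m - i) : ℕ) := by
    intro m a i
    rw [hΦ]
    split_ifs with h
    · exact mem_degreeLT.1 (a ⟨i, h⟩).2
    · rw [degree_zero]; exact WithBot.bot_lt_coe _
  have hΦinj : ∀ m (a : V m), Φ m a = 0 → a = 0 := by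
    intro m a ha
    funext i
    have := hΦ m a i
    rw [ha] at this
    simp only [coeff_zero, Fin.is_lt, dif_pos] at this
    exact Subtype.ext this.symm
  let Ψ : V (4 * e) × V (3 * e) →ₗ[κ] T :=
    { toFun := fun ab l => Ideal.Quotient.mk _
        ((taylor u₁ (Φ _ ab.1) + Wt * taylor u₁ (Φ _ ab.2)).coeff l)
      map_add' := by
        intro a b
        funext l
        refine Eq.trans (congrArg _ ?_) (map_add (Ideal.Quotient.mk _) _ _)
        rw [← coeff_add, Prod.fst_add, Prod.snd_add, map_add, map_add, map_add, map_add]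
        congr 1
        ring
      map_smul' := by
        intro c a
        funext l
        have key : ∀ f : κ[X][X], taylor u₁ (c • f) = c • taylor u₁ f := by
          intro f
          rw [← algebraMap_smul κ[X] c f, map_smul, algebraMap_smul]
        simp only [Prod.smul_fst, Prod.smul_snd, map_smul, key, RingHom.id_apply,
          mul_smul_comm, ← smul_add, coeff_smul]
        rfl }
  have hfinV : ∀ m, Module.finrank κ (V m) = ∑ i : Fin m, d * (m - i) := by
    intro m
    rw [Module.finrank_pi_fintype]
    refine Finset.sum_congr rfl fun i _ => ?_
    rw [(degreeLTEquiv κ _).finrank_eq]; simp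
  have hsum : ∀ m c : ℕ, 2 * ∑ i : Fin m, c * (m - i) = c * (m * (m + 1)) := by
    intro m c
    rw [Fin.sum_univ_eq_sum_range (fun i => c * (m - i)), ← Finset.mul_sum]
    have : ∑ i ∈ Finset.range m, (m - i) = ∑ i ∈ Finset.range (m + 1), i := by
      rw [Finset.sum_range_succ', ← Finset.sum_range_reflect]
      simp only [add_zero]
      refine Finset.sum_congr rfl fun i hi => ?_
      have := Finset.mem_range.1 hi
      omega
    rw [this, mul_left_comm, mul_comm 2, Finset.sum_range_id_mul_two, Nat.add_sub_cancel,
      mul_comm m]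
  have hfinT : Module.finrank κ T = ∑ i : Fin (5 * e), (4 * t * D) * (5 * e - i) := by
    have : ∀ l : Fin (5 * e), Module.Finite κ (κ[X] ⧸ Ideal.span {g ^ (4 * t * (5 * e - l))}) := by
      intro l
      have h0 : 0 < 4 * t * (5 * e - l) := by
        have := l.2
        have : 0 < 5 * e - l := by omega
        positivity
      apply Module.finite_of_finrank_pos
      rw [finrank_quotient_span_eq_natDegree, natDegree_pow]
      positivity
    rw [Module.finrank_pi_fintype]
    refine Finset.sum_congr rfl fun i _ => ?_
    rw [finrank_quotient_span_eq_natDegree, natDegree_pow]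
    ring
  have hfV : ∀ m, Module.Finite κ (V m) := fun m => by
    have : ∀ i : Fin m, Module.Finite κ (degreeLT κ (d * (m - i))) := fun i =>
      Module.Finite.equiv (degreeLTEquiv κ _).symm
    exact Module.Finite.pi
  have hT : Module.Finite κ T := by
    apply Module.finite_of_finrank_pos
    have := hsum (5 * e) (4 * t * D)
    rw [hfinT]
    have : 0 < (4 * t * D) * (5 * e * (5 * e + 1)) := by positivity
    omega
  have hlt : Module.finrank κ T < Module.finrank κ (V (4 * e) × V (3 * e)) := by
    have h1 := hfV (4 * e)
    have h2 := hfV (3 * e)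
    rw [Module.finrank_prod, hfinV, hfinV, hfinT]
    have a1 := hsum (5 * e) (4 * t * D)
    have a2 := hsum (4 * e) d
    have a3 := hsum (3 * e) d
    have : 4 * t * D * (5 * e * (5 * e + 1)) < d * (4 * e * (4 * e + 1)) + d * (3 * e * (3 * e + 1)) := by
      have hpos : 0 < t * D := by positivity
      have e1 : 4 * t * D * (5 * e * (5 * e + 1)) = (t * D) * (100 * e ^ 2 + 20 * e) := by ring
      have e2 : d * (4 * e * (4 * e + 1)) + d * (3 * e * (3 * e + 1))
        = (t * D) * (125 * e ^ 2 + 35 * e) := by simp only [d]; ring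
      rw [e1, e2]
      apply Nat.mul_lt_mul_of_pos_left _ hpos
      nlinarith
    omega
  have := hfV (4 * e)
  have := hfV (3 * e)
  have hker := LinearMap.ker_ne_bot_of_finrank_lt (f := Ψ) hlt
  obtain ⟨⟨a, b⟩, hab, hne⟩ := (Submodule.ne_bot_iff _).1 hker
  refine ⟨Φ _ a, Φ _ b, ?_, hΦdeg _ a, hΦdeg _ b, fun l hl => ?_⟩
  · by_contra hcon
    push Not at hcon
    apply hne
    rw [hΦinj _ a hcon.1, hΦinj _ b hcon.2]
    rfl
  · have := congrFun (LinearMap.mem_ker.1 hab) ⟨l, hl⟩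
    exact Ideal.mem_span_singleton.1 (Ideal.Quotient.eq_zero_iff_mem.1 this)

/-- At `u`, the value `A(u) + w B(u)` is divisible by `g ^ (20 * t * e)`, of degree `4 * e * d` with
`d = 5 * t * deg g`, but has smaller degree; hence it vanishes. -/
theorem pade_vanish {κ : Type*} [Field κ] (g : κ[X]) (hg : 0 < g.natDegree) (t e : ℕ)
    (u₁ : κ[X]) (Wt A B : κ[X][X])
    (hA : ∀ i, (A.coeff i).degree < (5 * t * g.natDegree * (4 * e - i) : ℕ))
    (hB : ∀ i, (B.coeff i).degree < (5 * t * g.natDegree * (3 * e - i) : ℕ))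
    (hAB : ∀ l < 5 * e, g ^ (4 * t * (5 * e - l)) ∣ (taylor u₁ A + Wt * taylor u₁ B).coeff l)
    (u w : κ[X]) (hu : g ^ (4 * t) ∣ u - u₁) (hud : u.natDegree ≤ 5 * t * g.natDegree)
    (hwd : w.natDegree ≤ e * (5 * t * g.natDegree))
    (hw : g ^ (4 * t * (5 * e)) ∣ Wt.eval (u - u₁) - w) :
    A.eval u + w * B.eval u = 0 := by
  set D := g.natDegree
  set d := 5 * t * D
  have hG : g ^ (4 * t * (5 * e)) ∣ (taylor u₁ A + Wt * taylor u₁ B).eval (u - u₁) := by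
    rw [eval_eq_sum_range]
    refine Finset.dvd_sum fun l _ => ?_
    rcases lt_or_ge l (5 * e) with hl | hl
    · have : 4 * t * (5 * e) = 4 * t * (5 * e - l) + 4 * t * l := by
        rw [← mul_add]; congr 1; omega
      rw [this, pow_add, pow_mul g (4 * t) l]
      exact mul_dvd_mul (hAB l hl) (pow_dvd_pow_of_dvd hu l)
    · refine Dvd.dvd.mul_left ?_ _
      refine (pow_dvd_pow g (Nat.mul_le_mul_left (4 * t) hl)).trans ?_
      rw [pow_mul]
      exact pow_dvd_pow_of_dvd hu l
  have hdiv : g ^ (4 * t * (5 * e)) ∣ A.eval u + w * B.eval u := by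
    have : A.eval u + w * B.eval u = (taylor u₁ A + Wt * taylor u₁ B).eval (u - u₁)
        - (Wt.eval (u - u₁) - w) * B.eval u := by
      simp only [eval_add, eval_mul, taylor_eval, sub_add_cancel]; ring
    rw [this]
    exact dvd_sub hG (hw.mul_right _)
  have hdeg : ∀ (f : κ[X][X]) (m : ℕ), (∀ i, (f.coeff i).degree < (d * (m - i) : ℕ)) →
      (f.eval u).degree < (d * m : ℕ) := by
    intro f m hf
    rw [eval_eq_sum_range]
    refine (degree_sum_le _ _).trans_lt ?_
    rw [Finset.sup_lt_iff (WithBot.bot_lt_coe _)]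
    intro i _
    by_cases h0 : f.coeff i = 0
    · rw [h0, zero_mul, degree_zero]; exact WithBot.bot_lt_coe _
    have h1 := hf i
    rw [degree_eq_natDegree h0, Nat.cast_lt] at h1
    refine (degree_le_natDegree).trans_lt ?_
    rw [Nat.cast_lt]
    refine (natDegree_mul_le).trans_lt ?_
    have h2 : (u ^ i).natDegree ≤ i * d := natDegree_pow_le.trans (Nat.mul_le_mul_left _ hud)
    have him : i < m := by
      by_contra hc
      rw [Nat.sub_eq_zero_of_le (not_lt.1 hc)] at h1
      simp at h1
    have : d * m = d * (m - i) + i * d := by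
      rw [mul_comm i d, ← mul_add]; congr 1; omega
    omega
  refine eq_zero_of_dvd_of_degree_lt hdiv ?_
  have hgd : (g ^ (4 * t * (5 * e))).degree = (d * (4 * e) : ℕ) := by
    have hg0 : g ≠ 0 := ne_zero_of_natDegree_gt hg
    rw [degree_eq_natDegree (pow_ne_zero _ hg0), natDegree_pow]
    congr 1
    simp only [d, D]; ring
  rw [hgd]
  refine (degree_add_le _ _).trans_lt (max_lt (hdeg A _ hA) ?_)
  rw [degree_mul]
  have hBd := hdeg B _ hB
  by_cases hB0 : B.eval u = 0
  · rw [hB0, degree_zero, WithBot.add_bot]; exact WithBot.bot_lt_coe _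
  rw [degree_eq_natDegree hB0, Nat.cast_lt] at hBd
  by_cases hw0 : w = 0
  · rw [hw0, degree_zero, WithBot.bot_add]; exact WithBot.bot_lt_coe _
  rw [degree_eq_natDegree hB0, degree_eq_natDegree hw0, ← Nat.cast_add, Nat.cast_lt]
  have : d * (4 * e) = e * d + d * (3 * e) := by ring
  omega

/-- Polynomial roots of `P(u, ·)` have degree at most linear in that of `u`. -/
theorem exists_root_degree_bound {κ : Type*} [Field κ] (P : κ[X][X][X]) (hP : P.Monic) :
    ∃ e : ℕ, 1 ≤ e ∧ ∀ d : ℕ, 1 ≤ d → ∀ u w : κ[X], u.natDegree ≤ d →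
      (P.map (evalRingHom u)).eval w = 0 → w.natDegree ≤ e * d := by
  classical
  have hc : ∀ c : κ[X][X], ∃ e : ℕ, ∀ d : ℕ, 1 ≤ d → ∀ u : κ[X], u.natDegree ≤ d →
      (c.eval u).natDegree ≤ e * d := by
    intro c
    refine ⟨(c.support.sup fun i => (c.coeff i).natDegree) + c.natDegree, fun d hd u hu => ?_⟩
    rw [eval_eq_sum]
    refine natDegree_sum_le_of_forall_le _ _ fun i hi => natDegree_mul_le.trans ?_
    have h1 : (c.coeff i).natDegree ≤ c.support.sup fun i => (c.coeff i).natDegree :=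
      Finset.le_sup (f := fun i => (c.coeff i).natDegree) hi
    have h2 : (u ^ i).natDegree ≤ i * d := natDegree_pow_le.trans (Nat.mul_le_mul_left _ hu)
    have h3 : i ≤ c.natDegree := le_natDegree_of_mem_supp i hi
    have h4 : i * d ≤ c.natDegree * d := Nat.mul_le_mul_right _ h3
    nlinarith
  choose E hE using hc
  refine ⟨(Finset.range P.natDegree).sup (fun i => E (P.coeff i)) + 1, by omega,
    fun d hd u w hu hw => ?_⟩
  set e := (Finset.range P.natDegree).sup (fun i => E (P.coeff i)) with he
  by_contra hcon
  push Not at hcon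
  set N := P.natDegree with hN
  have hsum : w ^ N + ∑ i ∈ Finset.range N, (P.coeff i).eval u * w ^ i = 0 := by
    have h := hw
    rw [eval_map, eval₂_eq_sum_range, Finset.sum_range_succ, coeff_natDegree, hP.leadingCoeff,
      map_one, one_mul] at h
    rw [← h, add_comm]
    simp [hN]
  have hwN : w ^ N = - ∑ i ∈ Finset.range N, (P.coeff i).eval u * w ^ i :=
    eq_neg_of_add_eq_zero_left hsum
  rcases Nat.eq_zero_or_pos N with h0 | h0
  · rw [h0] at hwN; simp at hwN
  have hle : (w ^ N).natDegree ≤ e * d + (N - 1) * w.natDegree := by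
    rw [hwN, natDegree_neg]
    refine natDegree_sum_le_of_forall_le _ _ fun i hi => natDegree_mul_le.trans ?_
    have h1 : ((P.coeff i).eval u).natDegree ≤ e * d :=
      (hE _ d hd u hu).trans (Nat.mul_le_mul_right _
        (Finset.le_sup (f := fun i => E (P.coeff i)) hi))
    have h2 : (w ^ i).natDegree ≤ (N - 1) * w.natDegree :=
      natDegree_pow_le.trans (Nat.mul_le_mul_right _ (by have := Finset.mem_range.1 hi; omega))
    omega
  rw [natDegree_pow] at hle
  obtain ⟨M, hM⟩ : ∃ M, N = M + 1 := ⟨N - 1, by omega⟩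
  rw [hM] at hle
  simp only [Nat.add_sub_cancel] at hle
  nlinarith

/-- The hypothesis `hno` says that `P` has no root `A / B` in the fraction field `κ(x, U)`: the
value of `P.scaleRoots B` at `A` is `B ^ deg P * P(A / B)`. If `(A, B) ≠ 0`, the points `u` at which
`-A / B` specializes to a root of `P(u, ·)` are then zeros of a nonzero polynomial in `U` whose
degree depends only on `P` and the bound `m`. -/
theorem exists_card_bound {κ : Type*} [Field κ] (P : κ[X][X][X])
    (hno : ∀ A B : κ[X][X], B ≠ 0 → (P.scaleRoots B).eval A ≠ 0) (m : ℕ) :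
    ∃ C : ℕ, ∀ A B : κ[X][X], (A ≠ 0 ∨ B ≠ 0) → A.natDegree ≤ m → B.natDegree ≤ m →
      ∀ S : Finset κ[X], (∀ u ∈ S, ∃ w, (P.map (evalRingHom u)).eval w = 0 ∧
        A.eval u + w * B.eval u = 0) → S.card ≤ C := by
  classical
  set N := P.natDegree
  set M := (Finset.range (N + 1)).sup fun i => (P.coeff i).natDegree with hM
  refine ⟨M + 2 * N * m + m, fun A B hAB hA hB S hS => ?_⟩
  have key : ∀ Q : κ[X][X], Q ≠ 0 → (∀ u ∈ S, Q.eval u = 0) → S.card ≤ Q.natDegree := by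
    intro Q hQ h
    refine le_trans (Finset.card_le_card (t := Q.roots.toFinset) fun u hu => ?_)
      ((Multiset.toFinset_card_le _).trans (card_roots' Q))
    rw [Multiset.mem_toFinset, mem_roots hQ]
    exact h u hu
  by_cases hB0 : B = 0
  · have hA0 : A ≠ 0 := by tauto
    refine (key A hA0 fun u hu => ?_).trans (by omega)
    obtain ⟨w, -, hw⟩ := hS u hu
    simpa [hB0] using hw
  · refine (key _ (hno (-A) B hB0) fun u hu => ?_).trans ?_
    · obtain ⟨w, hw1, hw2⟩ := hS u hu
      have hA' : (-A).eval u = B.eval u * w := by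
        rw [eval_neg]; linear_combination -hw2
      rw [← coe_evalRingHom, ← eval₂_hom, coe_evalRingHom, hA', ← coe_evalRingHom,
        scaleRoots_eval₂_mul, eval₂_eq_eval_map, hw1, mul_zero]
    · have hdeg : (P.scaleRoots B).natDegree = N := natDegree_scaleRoots _ _
      rw [eval_eq_sum_range, hdeg]
      refine (natDegree_sum_le_of_forall_le (n := M + 2 * N * m) _ _ fun i hi => ?_).trans (by omega)
      rw [coeff_scaleRoots]
      refine natDegree_mul_le.trans ((Nat.add_le_add_right natDegree_mul_le _).trans ?_)
      have hi' := Finset.mem_range.1 hi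
      have h1 : (P.coeff i).natDegree ≤ M :=
        Finset.le_sup (f := fun i => (P.coeff i).natDegree) hi
      have h2 : (B ^ (P.natDegree - i)).natDegree ≤ N * m :=
        natDegree_pow_le.trans (Nat.mul_le_mul (Nat.sub_le _ _) hB)
      have h3 : ((-A) ^ i).natDegree ≤ N * m :=
        natDegree_pow_le.trans (Nat.mul_le_mul (by omega) (by rwa [natDegree_neg]))
      nlinarith

/-! ### Bounding the specializations with a root -/

/-- The number of `j ≤ t` for which `P(u_j, ·)` has a root in a given class modulo the radical of
`g` is bounded independently of `t`, where `u_j = u₀ + g ^ (4 * t) * X ^ j`. Congruence modulo the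
radical is expressed by `g ∣ (w i - w j) ^ deg g`. -/
theorem card_class_bound {κ : Type*} [Field κ] (P : κ[X][X][X]) (hP : P.Monic)
    (hno : ∀ A B : κ[X][X], B ≠ 0 → (P.scaleRoots B).eval A ≠ 0)
    (a b : κ[X][X][X]) (δ : κ[X][X]) (hδ : a * P + b * derivative P = C δ)
    (u₀ g : κ[X]) (hg : 0 < g.natDegree) (hcop : IsCoprime g (δ.eval u₀)) :
    ∃ N : ℕ, ∀ t : ℕ, u₀.natDegree + 1 ≤ t → ∀ J : Finset ℕ, (∀ j ∈ J, j ≤ t) →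
      ∀ w : ℕ → κ[X], (∀ j ∈ J, (P.map (evalRingHom (u₀ + g ^ (4 * t) * X ^ j))).eval (w j) = 0) →
        (∀ i ∈ J, ∀ j ∈ J, g ∣ (w i - w j) ^ g.natDegree) → J.card ≤ N := by
  classical
  obtain ⟨e, he, hbound⟩ := exists_root_degree_bound P hP
  obtain ⟨N, hN⟩ := exists_card_bound P hno (4 * e)
  refine ⟨N, fun t ht J hJ w hw hcl => ?_⟩
  rcases J.eq_empty_or_nonempty with rfl | ⟨j₁, hj₁⟩
  · simp
  have hg0 : g ≠ 0 := ne_zero_of_natDegree_gt hg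
  have ht1 : 1 ≤ t := by omega
  obtain ⟨u, hu⟩ : ∃ u : ℕ → κ[X], ∀ j, u j = u₀ + g ^ (4 * t) * X ^ j := ⟨_, fun _ => rfl⟩
  simp only [← hu] at hw
  have hinj : Function.Injective u := by
    intro i j hij
    rw [hu, hu] at hij
    have := mul_left_cancel₀ (pow_ne_zero _ hg0) (add_left_cancel hij)
    have := congrArg natDegree this
    simpa using this
  have hud : ∀ j ∈ J, (u j).natDegree ≤ 5 * t * g.natDegree := by
    intro j hj
    rw [hu]
    refine (natDegree_add_le _ _).trans (max_le ?_ ?_)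
    · nlinarith
    · refine natDegree_mul_le.trans ?_
      rw [natDegree_pow, natDegree_X_pow]
      have := hJ j hj
      nlinarith
  have hdvd : ∀ j, g ^ (4 * t) ∣ u j - u j₁ := fun j => by
    refine ⟨X ^ j - X ^ j₁, ?_⟩
    simp only [hu]; ring
  have hgd : g ∣ g ^ (4 * t) := dvd_pow_self g (by omega)
  -- `g` is coprime to the discriminant-like `δ` at `u j₁`, hence `w j₁` is a simple root modulo `g`
  have hcop' : IsCoprime g ((derivative (P.map (evalRingHom (u j₁)))).eval (w j₁)) := by
    have h1 : g ∣ δ.eval (u j₁) - δ.eval u₀ := by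
      refine dvd_trans ?_ (sub_dvd_eval_sub _ _ _)
      simp only [hu, add_sub_cancel_left]
      exact hgd.mul_right _
    have h2 : IsCoprime g (δ.eval (u j₁)) := by
      obtain ⟨s, hs⟩ := h1
      rw [sub_eq_iff_eq_add.1 hs, add_comm]
      exact hcop.add_mul_left_right s
    have h3 : ((a * P + b * derivative P).map (evalRingHom (u j₁))).eval (w j₁)
        = ((C δ).map (evalRingHom (u j₁))).eval (w j₁) := by rw [hδ]
    rw [Polynomial.map_add, Polynomial.map_mul, Polynomial.map_mul, map_C, eval_add, eval_mul,
      eval_mul, eval_C, hw j₁ hj₁, mul_zero, zero_add, coe_evalRingHom] at h3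
    rw [← h3, ← derivative_map] at h2
    exact h2.of_mul_right_right
  obtain ⟨Wt, hWt⟩ := hensel_approx g P (u j₁) (w j₁) (4 * t) (5 * e) (hw j₁ hj₁) hcop'
  obtain ⟨A, B, hAB, hA, hB, hdiv⟩ := exists_pade g hg t e ht1 he (u j₁) Wt
  have hnat : ∀ (Q : κ[X][X]) (m : ℕ), m ≤ 4 * e →
      (∀ i, (Q.coeff i).degree < (5 * t * g.natDegree * (m - i) : ℕ)) → Q.natDegree ≤ 4 * e := by
    intro Q m hm hQ
    rw [natDegree_le_iff_coeff_eq_zero]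
    intro i hi
    have := hQ i
    rw [Nat.sub_eq_zero_of_le (by omega), mul_zero, Nat.cast_zero] at this
    by_contra h0
    exact absurd (zero_le_degree_iff.2 h0) (not_le.2 this)
  rw [← Finset.card_image_of_injective J hinj]
  refine hN A B hAB (hnat A _ le_rfl hA) (hnat B _ (by omega) hB) _ fun v hv => ?_
  obtain ⟨j, hj, rfl⟩ := Finset.mem_image.1 hv
  refine ⟨w j, hw j hj, ?_⟩
  refine pade_vanish g hg t e (u j₁) Wt A B hA hB hdiv (u j) (w j) (hdvd j) (hud j hj) ?_ ?_
  · exact hbound _ (by nlinarith) _ _ (hud j hj) (hw j hj)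
  · exact hWt _ _ _ (hdvd j) (hw j hj) (hcl j hj j₁ hj₁)

theorem dvd_pow_of_roots {κ : Type*} [Field κ] (g h : κ[X]) (hg : g ≠ 0)
    (H : ∀ a ∈ g.rootSet (AlgebraicClosure κ), aeval a h = 0) : g ∣ h ^ g.natDegree := by
  let Ω := AlgebraicClosure κ
  rw [← map_dvd_map' (algebraMap κ Ω), Polynomial.map_pow]
  have hs := IsAlgClosed.splits (g.map (algebraMap κ Ω))
  have hind : ∀ s : Multiset Ω, (∀ a ∈ s, aeval a h = 0) →
      (s.map fun a => X - C a).prod ∣ (h.map (algebraMap κ Ω)) ^ s.card := by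
    intro s
    induction s using Multiset.induction_on with
    | empty => simp
    | cons a s ih =>
      intro hs
      rw [Multiset.map_cons, Multiset.prod_cons, Multiset.card_cons, pow_succ']
      refine mul_dvd_mul ?_ (ih fun b hb => hs b (Multiset.mem_cons_of_mem hb))
      rw [dvd_iff_isRoot, IsRoot.def, eval_map_algebraMap]
      exact hs a (Multiset.mem_cons_self a s)
  have := hind (g.map (algebraMap κ Ω)).roots fun a ha => H a (by
    rw [mem_rootSet]
    refine ⟨hg, ?_⟩
    have := isRoot_of_mem_roots ha
    rwa [IsRoot.def, eval_map_algebraMap] at this)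
  rw [← hs.natDegree_eq_card_roots, natDegree_map] at this
  rw [hs.eq_prod_roots]
  refine (IsUnit.mul_left_dvd ?_).2 this
  rw [isUnit_C, isUnit_iff_ne_zero, leadingCoeff_ne_zero]
  exact (Polynomial.map_ne_zero_iff (algebraMap κ Ω).injective).2 hg

/-- The bound of `card_class_bound` for all roots together: the class of a root `w j` is determined
by its values at the roots of `g` in an algebraic closure, which are roots of `P(u₀, ·)` evaluated
there. -/
theorem card_bad_bound {κ : Type*} [Field κ] (P : κ[X][X][X]) (hP : P.Monic)
    (hno : ∀ A B : κ[X][X], B ≠ 0 → (P.scaleRoots B).eval A ≠ 0)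
    (a b : κ[X][X][X]) (δ : κ[X][X]) (hδ : a * P + b * derivative P = C δ)
    (u₀ g : κ[X]) (hg : 0 < g.natDegree) (hcop : IsCoprime g (δ.eval u₀)) :
    ∃ N : ℕ, ∀ t : ℕ, u₀.natDegree + 1 ≤ t → ∀ J : Finset ℕ, (∀ j ∈ J, j ≤ t) →
      (∀ j ∈ J, ∃ w, (P.map (evalRingHom (u₀ + g ^ (4 * t) * X ^ j))).eval w = 0) →
        J.card ≤ N := by
  classical
  let Ω := AlgebraicClosure κ
  obtain ⟨N, hN⟩ := card_class_bound P hP hno a b δ hδ u₀ g hg hcop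
  have hg0 : g ≠ 0 := ne_zero_of_natDegree_gt hg
  let ev (s : Ω) : κ[X] →+* Ω := (aeval s).toRingHom
  let R (s : g.rootSet Ω) : Finset Ω :=
    ((P.map (evalRingHom u₀)).map (ev s)).roots.toFinset
  refine ⟨N * (Fintype.piFinset R).card, fun t ht J hJ hw => ?_⟩
  choose! w hw using hw
  let f : ℕ → (g.rootSet Ω → Ω) := fun j s => aeval (s : Ω) (w j)
  refine Finset.card_le_mul_card_image_of_maps_to (f := f) ?_ N ?_
  · intro j hj
    rw [Fintype.mem_piFinset]
    intro s
    rw [Multiset.mem_toFinset, mem_roots ((hP.map _).map _).ne_zero, IsRoot.def]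
    have hs : aeval (s : Ω) g = 0 := (mem_rootSet.1 s.2).2
    have hcomp : (ev s).comp (evalRingHom (u₀ + g ^ (4 * t) * X ^ j)) = (ev s).comp (evalRingHom u₀) := by
      have : (0:ℕ) < 4 * t := by omega
      ext <;> simp [ev, hs, this.ne']
    rw [Polynomial.map_map, ← hcomp, ← Polynomial.map_map]
    have := congrArg (ev s) (hw j hj)
    rw [map_zero, ← eval₂_hom, ← eval_map] at this
    exact this
  · intro c _
    refine hN t ht _ (fun j hj => hJ j (Finset.mem_filter.1 hj).1) w
      (fun j hj => hw j (Finset.mem_filter.1 hj).1) fun i hi j hj => ?_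
    refine dvd_pow_of_roots g _ hg0 fun s hs => ?_
    have h1 := congrFun (Finset.mem_filter.1 hi).2 ⟨s, hs⟩
    have h2 := congrFun (Finset.mem_filter.1 hj).2 ⟨s, hs⟩
    rw [map_sub, sub_eq_zero]
    exact h1.trans h2.symm

/-! ### Existence of good specializations -/

/-- A nonconstant `g` over the small field `k` coprime to a given `h` over `κ`: `g = q + 1`, where
`q ∈ k[X]` vanishes at all roots of `h` that are algebraic over `k`. -/
theorem exists_coprime_poly {k κ : Type*} [Field k] [Field κ] [Algebra k κ] (h : κ[X]) (hh : h ≠ 0) :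
    ∃ g : k[X], 0 < g.natDegree ∧ IsCoprime (g.map (algebraMap k κ)) h := by
  classical
  let Ω := AlgebraicClosure κ
  let S : Finset Ω := (h.rootSet Ω).toFinset.filter (IsIntegral k)
  let q : k[X] := X * ∏ s ∈ S, minpoly k s
  have hq : q.Monic := monic_X.mul (monic_prod_of_monic _ _ fun s hs =>
    minpoly.monic (Finset.mem_filter.1 hs).2)
  have hqd : 0 < q.natDegree := by
    rw [Monic.natDegree_mul monic_X (monic_prod_of_monic _ _ fun s hs =>
    minpoly.monic (Finset.mem_filter.1 hs).2), natDegree_X]; omega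
  have hgd : (q + C 1).natDegree = q.natDegree := natDegree_add_C
  refine ⟨q + C 1, by omega, ?_⟩
  rw [isCoprime_iff_aeval_ne_zero_of_isAlgClosed κ Ω]
  intro s
  by_cases hs : aeval s h = 0
  · left
    rw [aeval_map_algebraMap]
    by_cases hi : IsIntegral k s
    · have : s ∈ S := by
        rw [Finset.mem_filter, Set.mem_toFinset, mem_rootSet]
        exact ⟨⟨hh, hs⟩, hi⟩
      have h0 : aeval s q = 0 := by
        simp only [q, map_mul, map_prod]
        rw [Finset.prod_eq_zero this (minpoly.aeval k s), mul_zero]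
      rw [map_add, h0]
      simp
    · intro h0
      refine hi (isAlgebraic_iff_isIntegral.1 ⟨q + C 1, ?_, h0⟩)
      exact ne_zero_of_natDegree_gt (n := 0) (by omega)
  · exact Or.inr hs

theorem exists_eval_map_ne_zero {k κ : Type*} [Field k] [Field κ] [Algebra k κ] (h : κ[X][X])
    (hh : h ≠ 0) : ∃ u : k[X], h.eval (u.map (algebraMap k κ)) ≠ 0 := by
  by_contra hcon
  push Not at hcon
  refine hh (eq_zero_of_infinite_isRoot h (Set.Infinite.mono (s := Set.range
    (Polynomial.map (algebraMap k κ))) ?_ (Set.infinite_range_of_injective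
      (map_injective _ (algebraMap k κ).injective))))
  rintro _ ⟨u, rfl⟩
  exact hcon u

/-- Finitely many monic polynomials `P i` over `κ[x][U]`, separable with a nonzero `δ i` in the
ideal generated by `P i` and its derivative, and without roots in `κ(x, U)`, have a common
specialization `U ↦ u ∈ k[x]` of large degree at which no `P i` acquires a root in `κ[x]` and given
nonzero elements of `κ[x][U]` do not vanish. -/
theorem exists_good_specialization {k κ : Type*} [Field k] [Field κ] [Algebra k κ]
    {ι : Type*} [Fintype ι] (P a b : ι → κ[X][X][X]) (δ : ι → κ[X][X]) (hP : ∀ i, (P i).Monic)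
    (hno : ∀ i, ∀ A B : κ[X][X], B ≠ 0 → ((P i).scaleRoots B).eval A ≠ 0)
    (hδ0 : ∀ i, δ i ≠ 0) (hδ : ∀ i, a i * P i + b i * derivative (P i) = C (δ i))
    (Δ : κ[X][X]) (hΔ : Δ ≠ 0) (d : ℕ) :
    ∃ u : k[X], d ≤ u.natDegree ∧ Δ.eval (u.map (algebraMap k κ)) ≠ 0 ∧
      (∀ i, (δ i).eval (u.map (algebraMap k κ)) ≠ 0) ∧
      ∀ i w, ((P i).map (evalRingHom (u.map (algebraMap k κ)))).eval w ≠ 0 := by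
  classical
  obtain ⟨u₀, hu₀⟩ := exists_eval_map_ne_zero (k := k) (Δ * ∏ i, δ i)
    (mul_ne_zero hΔ (Finset.prod_ne_zero_iff.2 fun i _ => hδ0 i))
  obtain ⟨g, hg, hcop⟩ := exists_coprime_poly (k := k) _ hu₀
  rw [eval_mul, eval_prod] at hcop
  have hcopΔ := hcop.of_mul_right_left
  have hcopδ : ∀ i, IsCoprime (g.map (algebraMap k κ)) ((δ i).eval (u₀.map (algebraMap k κ))) :=
    fun i => IsCoprime.of_prod_right hcop.of_mul_right_right i (Finset.mem_univ i)
  have hg' : 0 < (g.map (algebraMap k κ)).natDegree := by rwa [natDegree_map]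
  have hne : ∀ Q : κ[X][X], IsCoprime (g.map (algebraMap k κ)) (Q.eval (u₀.map (algebraMap k κ))) →
      ∀ t j, 1 ≤ t → Q.eval ((u₀ + g ^ (4 * t) * X ^ j).map (algebraMap k κ)) ≠ 0 := by
    intro Q hQ t j ht h0
    have h1 : g.map (algebraMap k κ) ∣ Q.eval ((u₀ + g ^ (4 * t) * X ^ j).map (algebraMap k κ))
        - Q.eval (u₀.map (algebraMap k κ)) := by
      refine dvd_trans ?_ (sub_dvd_eval_sub _ _ _)
      rw [Polynomial.map_add, add_sub_cancel_left, Polynomial.map_mul, Polynomial.map_pow]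
      exact (dvd_pow_self _ (by omega)).mul_right _
    rw [h0, zero_sub, dvd_neg] at h1
    have := hQ.isUnit_of_dvd' dvd_rfl h1
    exact (natDegree_pos_iff_degree_pos.1 hg').ne' (degree_eq_zero_of_isUnit this)
  choose N hN using fun i => card_bad_bound (P i) (hP i) (hno i) (a i) (b i) (δ i) (hδ i)
    (u₀.map (algebraMap k κ)) (g.map (algebraMap k κ)) hg' (hcopδ i)
  -- `t` exceeds the total number of bad exponents, so that one `j ≤ t` is good
  set t := u₀.natDegree + 1 + d + ∑ i, N i with ht
  let bad (i : ι) : Finset ℕ := (Finset.range (t + 1)).filter fun j =>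
    ∃ w, ((P i).map (evalRingHom ((u₀ + g ^ (4 * t) * X ^ j).map (algebraMap k κ)))).eval w = 0
  have hbad : ∀ i, (bad i).card ≤ N i := by
    intro i
    refine hN i t (by rw [natDegree_map]; omega) _ (fun j hj => ?_) fun j hj => ?_
    · have := Finset.mem_range.1 (Finset.mem_filter.1 hj).1
      omega
    · have := (Finset.mem_filter.1 hj).2
      simpa only [Polynomial.map_add, Polynomial.map_mul, Polynomial.map_pow, map_X] using this
  obtain ⟨j, hj, hjb⟩ : ∃ j ∈ Finset.range (t + 1), j ∉ Finset.univ.biUnion bad := by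
    by_contra hcon
    push Not at hcon
    have h1 := Finset.card_le_card (s := Finset.range (t + 1)) hcon
    have h2 := h1.trans (Finset.card_biUnion_le.trans (Finset.sum_le_sum fun i _ => hbad i))
    rw [Finset.card_range] at h2
    omega
  refine ⟨u₀ + g ^ (4 * t) * X ^ j, ?_, hne Δ hcopΔ t j (by omega),
    fun i => hne _ (hcopδ i) t j (by omega), fun i w hw => hjb ?_⟩
  · have hg0 : g ≠ 0 := ne_zero_of_natDegree_gt hg
    have h1 : (g ^ (4 * t) * X ^ j).natDegree = 4 * t * g.natDegree + j := by
      rw [natDegree_mul (pow_ne_zero _ hg0) (pow_ne_zero _ X_ne_zero), natDegree_pow,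
        natDegree_X_pow]
    have h2 : 4 * t ≤ 4 * t * g.natDegree := Nat.le_mul_of_pos_right _ hg
    rw [natDegree_add_eq_right_of_natDegree_lt (by omega)]
    omega
  · exact Finset.mem_biUnion.2 ⟨i, Finset.mem_univ i, Finset.mem_filter.2 ⟨hj, w, hw⟩⟩

/-! ### Orders of Galois groups of polynomials -/

/-- A family of automorphisms of an extension splitting `p`, distinguished by their effect on the
roots of `p`, has at most as many members as the Galois group of `p`. -/
theorem card_le_card_gal {K E G : Type*} [Field K] [Field E] [Algebra K E] (p : K[X])
    (hs : (p.map (algebraMap K E)).Splits) (ψ : G → (E ≃ₐ[K] E))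
    (h : ∀ σ τ, (∀ x ∈ p.rootSet E, ψ σ x = ψ τ x) → σ = τ) : Nat.card G ≤ Nat.card p.Gal := by
  have : Fact ((p.map (algebraMap K E)).Splits) := ⟨hs⟩
  refine Nat.card_le_card_of_injective (fun σ => Polynomial.Gal.restrict p E (ψ σ)) fun σ τ hστ => ?_
  refine h σ τ fun x hx => ?_
  have h1 := Polynomial.Gal.restrict_smul (p := p) (E := E) (ψ σ) ⟨x, hx⟩
  have h2 := Polynomial.Gal.restrict_smul (p := p) (E := E) (ψ τ) ⟨x, hx⟩
  simp only at hστ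
  rw [hστ] at h1
  exact h1.symm.trans h2

/-- The Galois group does not grow under extension of the base field. -/
theorem card_gal_map_le {K K' : Type*} [Field K] [Field K'] (f : K →+* K') (p : K[X]) :
    Nat.card (p.map f).Gal ≤ Nat.card p.Gal := by
  let E := (p.map f).SplittingField
  let : Algebra K K' := f.toAlgebra
  have : IsScalarTower K K' E := inferInstance
  have hs : (p.map (algebraMap K E)).Splits := by
    have := SplittingField.splits (p.map f)
    rwa [Polynomial.map_map] at this
  refine card_le_card_gal p hs (fun σ : (p.map f).Gal => AlgEquiv.restrictScalars K (σ : E ≃ₐ[K'] E)) ?_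
  intro σ τ h
  refine Polynomial.Gal.ext _ fun x hx => h x ?_
  rw [mem_rootSet'] at hx ⊢
  rw [Polynomial.map_map] at hx
  exact ⟨hx.1, by simpa [aeval_def, eval₂_map] using! hx.2⟩

theorem card_gal_le_card_rootSet {K : Type*} [Field K] (p : K[X]) :
    Nat.card p.Gal ≤ (Nat.card (p.rootSet p.SplittingField)).factorial := by
  have : Fact ((p.map (algebraMap K p.SplittingField)).Splits) := ⟨SplittingField.splits p⟩
  rw [← Nat.card_perm]
  exact Nat.card_le_card_of_injective _ (Polynomial.Gal.galActionHom_injective p p.SplittingField)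

theorem card_gal_le {K : Type*} [Field K] (p : K[X]) :
    Nat.card p.Gal ≤ p.natDegree.factorial := by
  refine (card_gal_le_card_rootSet p).trans (Nat.factorial_le ?_)
  rw [Nat.card_coe_set_eq]
  exact ncard_rootSet_le p _

/-- With fewer than `n` distinct roots the group would embed into a smaller symmetric group. The
assumption `1 ≤ p.natDegree` excludes the zero polynomial. -/
theorem separable_of_card_gal {K : Type*} [Field K] (p : K[X]) (hp : 1 ≤ p.natDegree)
    (h : Nat.card p.Gal = p.natDegree.factorial) : p.Separable := by
  classical
  have hp0 : p ≠ 0 := ne_zero_of_natDegree_gt hp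
  rw [← card_rootSet_eq_natDegree_iff_of_splits (K := p.SplittingField) hp0 (SplittingField.splits p)]
  rw [← Nat.card_eq_fintype_card]
  have h1 := card_gal_le_card_rootSet p
  have h2 : Nat.card (p.rootSet p.SplittingField) ≤ p.natDegree := by
    rw [Nat.card_coe_set_eq]
    exact ncard_rootSet_le p _
  rw [h] at h1
  refine le_antisymm h2 (not_lt.1 fun hlt => ?_)
  rcases Nat.eq_zero_or_pos (Nat.card (p.rootSet p.SplittingField)) with h0 | h0
  · obtain ⟨x, hx⟩ := (SplittingField.splits p).exists_eval_eq_zero (by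
      rw [degree_map]; exact (natDegree_pos_iff_degree_pos.1 hp).ne')
    have : x ∈ p.rootSet p.SplittingField := by
      rw [mem_rootSet]; exact ⟨hp0, by simpa using hx⟩
    rw [Nat.card_eq_fintype_card, Fintype.card_eq_zero_iff] at h0
    exact h0.false ⟨x, this⟩
  · exact absurd ((Nat.factorial_lt h0).2 hlt) (not_lt.2 h1)

/-- The order of the Galois group is unchanged by a purely transcendental extension: automorphisms
of the splitting field `E` act on the coefficients in `E(X)`. -/
theorem card_gal_le_ratFunc {K : Type*} [Field K] (p : K[X]) (hp : p ≠ 0):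
    Nat.card p.Gal ≤ Nat.card (p.map (algebraMap K (RatFunc K))).Gal := by
  let E := p.SplittingField
  let : Algebra K[X] E[X] := (mapRingHom (algebraMap K E)).toAlgebra
  have : IsScalarTower K[X] E[X] (RatFunc E) := IsScalarTower.of_algebraMap_eq fun _ => rfl
  have hinj : Function.Injective (algebraMap K[X] (RatFunc E)) :=
    (RatFunc.algebraMap_injective E).comp (map_injective _ (algebraMap K E).injective)
  let : Algebra (RatFunc K) (RatFunc E) := (IsFractionRing.lift (K := RatFunc K) hinj).toAlgebra
  have : IsScalarTower K[X] (RatFunc K) (RatFunc E) :=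
    IsScalarTower.of_algebraMap_eq fun x => (IsFractionRing.lift_algebraMap hinj x).symm
  have hcomp : ∀ c : K, algebraMap (RatFunc K) (RatFunc E) (algebraMap K (RatFunc K) c)
      = algebraMap E (RatFunc E) (algebraMap K E c) := by
    intro c
    rw [IsScalarTower.algebraMap_apply K K[X] (RatFunc K), ← IsScalarTower.algebraMap_apply K[X] (RatFunc K),
      IsScalarTower.algebraMap_apply K[X] E[X] (RatFunc E), IsScalarTower.algebraMap_apply E E[X] (RatFunc E)]
    congr 1
    exact map_C _
  have hcomp' : (algebraMap (RatFunc K) (RatFunc E)).comp (algebraMap K (RatFunc K))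
      = (algebraMap E (RatFunc E)).comp (algebraMap K E) := RingHom.ext hcomp
  have hs := SplittingField.splits p
  let ψ : p.Gal → (RatFunc E ≃ₐ[RatFunc K] RatFunc E) := fun σ =>
    IsFractionRing.fieldEquivOfAlgEquiv (RatFunc K) (RatFunc E) (RatFunc E)
      (AlgEquiv.ofRingEquiv (f := mapEquiv (σ : E ≃ₐ[K] E).toRingEquiv) (R := K[X]) (by
        intro x
        change (x.map _).map _ = x.map _
        rw [Polynomial.map_map]
        congr 1
        ext c
        exact AlgEquiv.commutes (σ : E ≃ₐ[K] E) c))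
  have hψ : ∀ σ (x : E), ψ σ (algebraMap E (RatFunc E) x) = algebraMap E (RatFunc E) (σ x) := by
    intro σ x
    rw [IsScalarTower.algebraMap_apply E E[X] (RatFunc E), IsScalarTower.algebraMap_apply E E[X] (RatFunc E)]
    refine (IsFractionRing.fieldEquivOfAlgEquiv_algebraMap _ _ _ _ _).trans (congrArg _ ?_)
    exact map_C _
  refine card_le_card_gal (E := RatFunc E) _ ?_ ψ ?_
  · rw [Polynomial.map_map, hcomp', ← Polynomial.map_map]
    exact hs.map _
  · intro σ τ h
    refine Polynomial.Gal.ext _ fun x hx => ?_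
    refine (algebraMap E (RatFunc E)).injective ?_
    rw [← hψ, ← hψ]
    refine h _ ?_
    rw [mem_rootSet] at hx ⊢
    refine ⟨(Polynomial.map_ne_zero_iff (algebraMap K (RatFunc K)).injective).2 hp, ?_⟩
    rw [aeval_def, eval₂_map, hcomp', ← eval₂_map, eval₂_at_apply, eval_map, ← aeval_def, hx.2, map_zero]

/-! ### Decomposition groups -/

section

open scoped Pointwise

theorem mem_range_of_fixed {K M : Type*} [Field K] [Field M] [Algebra K M] [Normal K M] (x : M)
    (hx : IsSeparable K x) (h : ∀ f : M ≃ₐ[K] M, f x = x) : x ∈ (algebraMap K M).range := by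
  by_contra hcon
  have : x ∉ (⊥ : Subalgebra K M) := fun hb => hcon (by simpa [Algebra.mem_bot] using hb)
  obtain ⟨y, hxy, hy⟩ := (notMem_iff_exists_ne_and_isConjRoot hx (Normal.splits inferInstance x)).1 this
  obtain ⟨σ, hσ⟩ := isConjRoot_iff_exists_algEquiv.1 hy.symm
  exact hxy ((h σ).symm.trans hσ)

/-- If the decomposition group `D` of `Q` were proper, the hypothesis for `H = D` would provide an
element `θ` whose residue class is separable over the residue field of `𝔭` (by `δ ∉ 𝔭`) and is fixed
by all automorphisms, since `D` surjects onto them. The class lies then in the residue field, and in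
`A ⧸ 𝔭` by integral closedness, contradicting that `P` has no root modulo `𝔭`. -/
theorem stabilizer_eq_top {A B G : Type*} [CommRing A] [CommRing B] [Algebra A B] [Group G]
    [Finite G] [MulSemiringAction G B] [SMulCommClass G A B] [Algebra.IsInvariant A B G]
    (𝔭 : Ideal A) [𝔭.IsPrime] [IsIntegrallyClosed (A ⧸ 𝔭)] (Q : Ideal B) [Q.IsPrime]
    [Q.LiesOver 𝔭]
    (H : ∀ H : Subgroup G, H ≠ ⊤ → ∃ (θ : B) (P a b : A[X]) (δ : A), (∀ σ ∈ H, σ • θ = θ) ∧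
      P.Monic ∧ aeval θ P = 0 ∧ a * P + b * derivative P = C δ ∧ δ ∉ 𝔭 ∧ ∀ x, P.eval x ∉ 𝔭) :
    MulAction.stabilizer G Q = ⊤ := by
  by_contra hD
  obtain ⟨θ, P, a, b, δ, hfix, hP, hroot, hbez, hδ, hno⟩ := H _ hD
  let K := FractionRing (A ⧸ 𝔭)
  let M := FractionRing (B ⧸ Q)
  have hinj : Function.Injective (algebraMap (A ⧸ 𝔭) M) := by
    rw [IsScalarTower.algebraMap_eq (A ⧸ 𝔭) (B ⧸ Q) M]
    exact (IsFractionRing.injective (B ⧸ Q) M).comp (FaithfulSMul.algebraMap_injective _ _)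
  let : Algebra K M := (IsFractionRing.lift (K := K) hinj).toAlgebra
  have : IsScalarTower (A ⧸ 𝔭) K M :=
    IsScalarTower.of_algebraMap_eq fun x => (IsFractionRing.lift_algebraMap hinj x).symm
  have : Normal K M := Ideal.IsFractionRing.normal G 𝔭 Q K M
  let x : M := algebraMap (B ⧸ Q) M (Ideal.Quotient.mk Q θ)
  let f : A →+* K := (algebraMap (A ⧸ 𝔭) K).comp (Ideal.Quotient.mk 𝔭)
  have hfM : (algebraMap K M).comp f
      = ((algebraMap (B ⧸ Q) M).comp (Ideal.Quotient.mk Q)).comp (algebraMap A B) := by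
    ext r
    simp only [f, RingHom.comp_apply]
    rw [← IsScalarTower.algebraMap_apply (A ⧸ 𝔭) K M,
      IsScalarTower.algebraMap_apply (A ⧸ 𝔭) (B ⧸ Q) M]
    rfl
  have hf0 : ∀ r, f r = 0 ↔ r ∈ 𝔭 := by
    intro r
    simp only [f, RingHom.comp_apply]
    rw [map_eq_zero_iff _ (IsFractionRing.injective (A ⧸ 𝔭) K), Ideal.Quotient.eq_zero_iff_mem]
  have hx0 : aeval x (P.map f) = 0 := by
    rw [aeval_def, eval₂_map, hfM]
    have := congrArg ((algebraMap (B ⧸ Q) M).comp (Ideal.Quotient.mk Q)) hroot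
    rwa [aeval_def, hom_eval₂, map_zero] at this
  have hsepP : (P.map f).Separable := by
    have h := congrArg (Polynomial.map f) hbez
    simp only [Polynomial.map_add, Polynomial.map_mul, map_C, ← derivative_map] at h
    have hd : f δ ≠ 0 := fun h => hδ ((hf0 _).1 h)
    refine ⟨C (f δ)⁻¹ * a.map f, C (f δ)⁻¹ * b.map f, ?_⟩
    rw [mul_assoc, mul_assoc, ← mul_add, h, ← C_mul, inv_mul_cancel₀ hd, C_1]
  have hsep : IsSeparable K x := hsepP.of_dvd (minpoly.dvd K x hx0)
  obtain ⟨y, hy⟩ := mem_range_of_fixed x hsep (fun φ => by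
    obtain ⟨σ, rfl⟩ := IsFractionRing.stabilizerHom_surjective G 𝔭 Q K M φ
    refine (IsFractionRing.stabilizerHom_apply_apply_mk G 𝔭 Q K M σ θ).trans ?_
    rw [hfix _ σ.2])
  have hy0 : (P.map (Ideal.Quotient.mk 𝔭)).eval₂ (algebraMap (A ⧸ 𝔭) K) y = 0 := by
    refine (algebraMap K M).injective ?_
    rw [eval₂_map, hom_eval₂, hy, map_zero, ← hx0, aeval_def, eval₂_map]
  obtain ⟨r, hr⟩ := IsIntegrallyClosed.isIntegral_iff.1 ⟨_, hP.map _, hy0⟩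
  obtain ⟨r, rfl⟩ := Ideal.Quotient.mk_surjective r
  refine hno r ((hf0 _).1 ?_)
  rw [← hr, eval₂_map] at hy0
  rw [← eval₂_hom]
  exact hy0

/-- When the decomposition group is the whole group `G`, reduction modulo `Q` maps `G` to the
automorphisms of the residue field extension, which splits `F` modulo `𝔭`. The `z i` are the roots
of `F` multiplied by the leading coefficient `l`, so that they are integral; if they separate the
elements of `G` modulo `Q`, the map is injective on the roots. -/
theorem card_le_card_gal_specialize {A B G : Type*} [CommRing A] [CommRing B] [Algebra A B] [Group G]
    [Finite G] [MulSemiringAction G B] [SMulCommClass G A B] [Algebra.IsInvariant A B G]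
    (𝔭 : Ideal A) [𝔭.IsPrime] (Q : Ideal B) [Q.IsPrime] [Q.LiesOver 𝔭]
    (hD : MulAction.stabilizer G Q = ⊤) (F : A[X]) (l : A) (hl : l ∉ 𝔭) (hF : F.leadingCoeff = l)
    {ι : Type*} [Fintype ι]
    (z : ι → B) (N : ℕ) (hz : C (algebraMap A B l) ^ N * F.map (algebraMap A B)
      = C (algebraMap A B l) * ∏ i, (C (algebraMap A B l) * X - C (z i)))
    (hinjG : ∀ σ τ : G, (∀ i, σ • z i - τ • z i ∈ Q) → σ = τ) :
    Nat.card G ≤ Nat.card (F.map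
      ((algebraMap (A ⧸ 𝔭) (FractionRing (A ⧸ 𝔭))).comp (Ideal.Quotient.mk 𝔭))).Gal := by
  let K := FractionRing (A ⧸ 𝔭)
  let M := FractionRing (B ⧸ Q)
  have hinj : Function.Injective (algebraMap (A ⧸ 𝔭) M) := by
    rw [IsScalarTower.algebraMap_eq (A ⧸ 𝔭) (B ⧸ Q) M]
    exact (IsFractionRing.injective (B ⧸ Q) M).comp (FaithfulSMul.algebraMap_injective _ _)
  let : Algebra K M := (IsFractionRing.lift (K := K) hinj).toAlgebra
  have : IsScalarTower (A ⧸ 𝔭) K M :=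
    IsScalarTower.of_algebraMap_eq fun x => (IsFractionRing.lift_algebraMap hinj x).symm
  let f : A →+* K := (algebraMap (A ⧸ 𝔭) K).comp (Ideal.Quotient.mk 𝔭)
  let q : B →+* M := (algebraMap (B ⧸ Q) M).comp (Ideal.Quotient.mk Q)
  have hfM : (algebraMap K M).comp f = q.comp (algebraMap A B) := by
    ext r
    simp only [f, q, RingHom.comp_apply]
    rw [← IsScalarTower.algebraMap_apply (A ⧸ 𝔭) K M,
      IsScalarTower.algebraMap_apply (A ⧸ 𝔭) (B ⧸ Q) M]
    rfl
  have hfM' : ∀ r, algebraMap K M (f r) = q (algebraMap A B r) := fun r => RingHom.congr_fun hfM r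
  have hfl : f l ≠ 0 := by
    intro h
    apply hl
    simp only [f, RingHom.comp_apply] at h
    rwa [map_eq_zero_iff _ (IsFractionRing.injective (A ⧸ 𝔭) K), Ideal.Quotient.eq_zero_iff_mem] at h
  have hql : q (algebraMap A B l) ≠ 0 := by
    rw [← hfM']
    exact (_root_.map_ne_zero _).2 hfl
  have hF0 : F.map f ≠ 0 := by
    intro h
    have := congrArg (fun r => r.coeff F.natDegree) h
    simp only [coeff_map, coeff_natDegree, hF, coeff_zero] at this
    exact hfl this
  have hz' := congrArg (Polynomial.map q) hz
  simp only [Polynomial.map_mul, Polynomial.map_pow, map_C, Polynomial.map_map, ← hfM,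
    Polynomial.map_prod, Polynomial.map_sub, map_X] at hz'
  have hne : C (q (algebraMap A B l)) ^ N ≠ 0 := pow_ne_zero _ (C_ne_zero.2 hql)
  have hF0M : F.map ((algebraMap K M).comp f) ≠ 0 := by
    rw [← Polynomial.map_map]
    exact (Polynomial.map_ne_zero_iff (algebraMap K M).injective).2 hF0
  refine card_le_card_gal (K := K) (E := M) (F.map f) ?_
    (fun σ : G => IsFractionRing.stabilizerHom G 𝔭 Q K M ⟨σ, hD ▸ Subgroup.mem_top σ⟩) ?_
  · rw [Polynomial.map_map]
    have hs : (C (q (algebraMap A B l)) ^ N * F.map ((algebraMap K M).comp f)).Splits := by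
      rw [hz']
      refine (Splits.C _).mul (Splits.prod fun i _ => ?_)
      rw [sub_eq_add_neg, ← C_neg]
      exact Splits.of_natDegree_le_one natDegree_linear_le
    exact hs.of_dvd (mul_ne_zero hne hF0M) (dvd_mul_left _ _)
  · intro σ τ h
    refine hinjG σ τ fun i => ?_
    have hmem : q (z i) / q (algebraMap A B l) ∈ (F.map f).rootSet M := by
      rw [mem_rootSet', Polynomial.map_map]
      refine ⟨hF0M, ?_⟩
      have := congrArg (eval (q (z i) / q (algebraMap A B l))) hz'
      rw [eval_mul, eval_mul, eval_prod, Finset.prod_eq_zero (Finset.mem_univ i), mul_zero] at this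
      · rw [aeval_def, eval₂_map, ← eval_map]
        refine (mul_eq_zero.1 this).resolve_left ?_
        simp [hql]
      · simp [mul_div_cancel₀ _ hql]
    have h1 := h _ hmem
    have hact : ∀ σ : MulAction.stabilizer G Q, IsFractionRing.stabilizerHom G 𝔭 Q K M σ
        (q (z i) / q (algebraMap A B l)) = q (σ.1 • z i) / q (algebraMap A B l) := by
      intro σ
      rw [map_div₀, ← hfM', AlgEquiv.commutes]
      congr 1
      exact IsFractionRing.stabilizerHom_apply_apply_mk G 𝔭 Q K M σ (z i)
    simp only [hact] at h1
    rw [div_left_inj' hql] at h1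
    have h2 := IsFractionRing.injective (B ⧸ Q) M h1
    exact Ideal.Quotient.eq.1 h2

end

/-! ### Integral elements attached to proper subgroups -/

/-- Clearing denominators in a Bézout identity for `P` and its derivative. -/
theorem exists_bezout {A L : Type*} [CommRing A] [IsDomain A] [Field L] [Algebra A L]
    [IsFractionRing A L] (P : A[X]) (h : (P.map (algebraMap A L)).Separable) :
    ∃ (a b : A[X]) (δ : A), δ ≠ 0 ∧ a * P + b * derivative P = C δ := by
  obtain ⟨a, b, hab⟩ := h
  obtain ⟨c, hc, ha⟩ := IsLocalization.integerNormalization_spec (nonZeroDivisors A) a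
  obtain ⟨d, hd, hb⟩ := IsLocalization.integerNormalization_spec (nonZeroDivisors A) b
  refine ⟨C d * IsLocalization.integerNormalization (nonZeroDivisors A) a,
    C c * IsLocalization.integerNormalization (nonZeroDivisors A) b, c * d,
    mul_ne_zero (nonZeroDivisors.ne_zero hc) (nonZeroDivisors.ne_zero hd), ?_⟩
  apply map_injective _ (IsFractionRing.injective A L)
  have hsm : ∀ (c : A) (a : L[X]), c • a = C (algebraMap A L c) * a := fun c a => by
    rw [← smul_eq_C_mul, algebraMap_smul]
  simp only [Polynomial.map_add, Polynomial.map_mul, map_C, ha, hb, hsm, ← derivative_map, map_mul]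
  linear_combination (C (algebraMap A L c) * C (algebraMap A L d)) * hab

/-- The minimal polynomial of an integral element outside `L` has no root `x / y` in `L`. -/
theorem scaleRoots_minpoly_eval_ne_zero {A L E : Type*} [CommRing A] [IsDomain A]
    [IsIntegrallyClosed A] [Field L] [Algebra A L] [IsFractionRing A L] [Field E] [Algebra A E]
    [Algebra L E] [IsScalarTower A L E] {θ : E} (hθ : IsIntegral A θ)
    (hr : θ ∉ (algebraMap L E).range) (x y : A) (hy : y ≠ 0) :
    ((minpoly A θ).scaleRoots y).eval x ≠ 0 := by
  intro h
  have hy' : algebraMap A L y ≠ 0 := by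
    rwa [Ne, map_eq_zero_iff _ (IsFractionRing.injective A L)]
  have hmp : minpoly L θ = (minpoly A θ).map (algebraMap A L) :=
    minpoly.isIntegrallyClosed_eq_field_fractions L E hθ
  have h2 : (minpoly L θ).IsRoot (algebraMap A L x / algebraMap A L y) := by
    have h3 := scaleRoots_eval₂_mul (p := minpoly A θ) (algebraMap A L)
      (algebraMap A L x / algebraMap A L y) y
    rw [mul_div_cancel₀ _ hy', eval₂_at_apply, h, map_zero] at h3
    rw [IsRoot.def, hmp, eval_map]
    exact (mul_eq_zero.1 h3.symm).resolve_left (pow_ne_zero _ hy')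
  have hi : IsIntegral L θ := hθ.tower_top
  exact hr (minpoly.mem_range_of_degree_eq_one L θ
    (degree_eq_one_of_irreducible_of_root (minpoly.irreducible hi) h2))

/-- A proper subgroup of the Galois group fixes an element outside the base field, by the Galois
correspondence, and a multiple of it is integral over `A`. -/
theorem exists_fixed_integral (A : Type*) {L E : Type*} [CommRing A] [IsDomain A]
    [Field L] [Algebra A L] [IsFractionRing A L] [Field E] [Algebra A E]
    [Algebra L E] [IsScalarTower A L E] [FiniteDimensional L E] [IsGalois L E]
    (H : Subgroup (E ≃ₐ[L] E)) (hH : H ≠ ⊤) :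
    ∃ θ : E, IsIntegral A θ ∧ θ ∉ (algebraMap L E).range ∧ ∀ σ ∈ H, σ θ = θ := by
  have hne : IntermediateField.fixedField H ≠ ⊥ := by
    intro h
    apply hH
    rw [← IntermediateField.fixingSubgroup_fixedField H, h, IntermediateField.fixingSubgroup_bot]
  obtain ⟨x, hx, hxb⟩ := SetLike.exists_of_lt (bot_lt_iff_ne_bot.2 hne)
  have hxalg : IsAlgebraic A x :=
    (IsFractionRing.isAlgebraic_iff A L E).2 (Algebra.IsAlgebraic.isAlgebraic x)
  obtain ⟨c, hc, hint⟩ := hxalg.exists_integral_multiple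
  have hc' : algebraMap A L c ≠ 0 := by
    rwa [Ne, map_eq_zero_iff _ (IsFractionRing.injective A L)]
  refine ⟨c • x, hint, fun ⟨r, hr⟩ => hxb ?_, fun σ hσ => ?_⟩
  · rw [IntermediateField.mem_bot]
    refine ⟨r / algebraMap A L c, ?_⟩
    rw [map_div₀, hr, ← algebraMap_smul L c x, Algebra.smul_def, mul_div_cancel_left₀]
    exact (_root_.map_ne_zero _).2 hc'
  · rw [← algebraMap_smul L c x, map_smul]
    congr 1
    exact (IntermediateField.mem_fixedField_iff H x).1 hx σ hσ

/-! ### The Hilbert data of a polynomial -/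

section

open scoped Pointwise

/-- Conditions under which the specialization of `F` modulo a prime `𝔭` keeps the degree and the
order of the Galois group: `𝔭` avoids the `δ i` and `Δ`, and the `P i` have no root modulo `𝔭`. The
index set consists of the proper subgroups of the Galois group, and `P i` is the minimal polynomial
of an integral element fixed by the subgroup. -/
theorem exists_hilbert_data_aux.{u} {A L E : Type u} [CommRing A] [IsDomain A] [IsIntegrallyClosed A]
    [Field L] [Algebra A L] [IsFractionRing A L] [Field E] [Algebra A E]
    [Algebra L E] [IsScalarTower A L E] [FiniteDimensional L E] [IsGalois L E]
    (F : A[X]) (hF0 : F ≠ 0) (hsplit : (F.map (algebraMap A E)).Splits)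
    (hsep : (F.map (algebraMap A E)).roots.Nodup)
    (hfaith : ∀ σ τ : E ≃ₐ[L] E, (∀ x : E, aeval x F = 0 → σ x = τ x) → σ = τ) :
    ∃ (ι : Type u) (_ : Fintype ι) (P a b : ι → A[X]) (δ : ι → A) (Δ : A),
      (∀ i, (P i).Monic) ∧ (∀ i x y, y ≠ 0 → ((P i).scaleRoots y).eval x ≠ 0) ∧
      (∀ i, δ i ≠ 0) ∧ (∀ i, a i * P i + b i * derivative (P i) = C (δ i)) ∧ Δ ≠ 0 ∧
      ∀ (𝔭 : Ideal A) [𝔭.IsPrime] [IsIntegrallyClosed (A ⧸ 𝔭)], Δ ∉ 𝔭 → (∀ i, δ i ∉ 𝔭) →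
        (∀ i x, (P i).eval x ∉ 𝔭) → F.leadingCoeff ∉ 𝔭 ∧
        Nat.card (E ≃ₐ[L] E) ≤ Nat.card (F.map
          ((algebraMap (A ⧸ 𝔭) (FractionRing (A ⧸ 𝔭))).comp (Ideal.Quotient.mk 𝔭))).Gal := by
  classical
  let G := E ≃ₐ[L] E
  let B := integralClosure A E
  let ℓ := F.leadingCoeff
  have hinjAE : Function.Injective (algebraMap A E) := by
    rw [IsScalarTower.algebraMap_eq A L E]
    exact (algebraMap L E).injective.comp (IsFractionRing.injective A L)
  have hinjBE : Function.Injective (algebraMap B E) := Subtype.val_injective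
  have hinjAB : Function.Injective (algebraMap A B) := by
    have : Function.Injective ((algebraMap B E) ∘ (algebraMap A B)) := hinjAE
    exact this.of_comp
  have : FaithfulSMul A B := (faithfulSMul_iff_algebraMap_injective A B).2 hinjAB
  have : IsFractionRing B E := integralClosure.isFractionRing_of_finite_extension L E
  let : MulSemiringAction G B := IsIntegralClosure.MulSemiringAction A L E B
  have hact : ∀ (σ : G) (x : B), algebraMap B E (σ • x) = σ (algebraMap B E x) :=
    fun σ x => algebraMap_galRestrict_apply A σ x
  have : SMulCommClass G A B := ⟨fun σ c x => by
    apply hinjBE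
    simp only [hact, Algebra.smul_def, map_mul, ← IsScalarTower.algebraMap_apply A B E]
    rw [IsScalarTower.algebraMap_apply A L E, AlgEquiv.commutes]⟩
  have : Algebra.IsInvariant A B G := Algebra.isInvariant_of_isGalois A L E B
  have key : ∀ H : {H : Subgroup G // H ≠ ⊤}, ∃ (θ : B) (P a b : A[X]) (δ : A),
      (∀ σ ∈ H.1, σ • θ = θ) ∧ P.Monic ∧ aeval θ P = 0 ∧ a * P + b * derivative P = C δ ∧
      δ ≠ 0 ∧ ∀ x y, y ≠ 0 → (P.scaleRoots y).eval x ≠ 0 := by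
    intro ⟨H, hH⟩
    obtain ⟨θ, hθ, hr, hfix⟩ := exists_fixed_integral A H hH
    have hmp : minpoly L θ = (minpoly A θ).map (algebraMap A L) :=
      minpoly.isIntegrallyClosed_eq_field_fractions L E hθ
    obtain ⟨a, b, δ, hδ, hab⟩ := exists_bezout (L := L) (minpoly A θ) (by
      rw [← hmp]; exact Algebra.IsSeparable.isSeparable L θ)
    refine ⟨⟨θ, hθ⟩, minpoly A θ, a, b, δ, fun σ hσ => ?_, minpoly.monic hθ, ?_, hab, hδ,
      scaleRoots_minpoly_eval_ne_zero (L := L) hθ hr⟩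
    · apply hinjBE
      rw [hact]
      exact hfix σ hσ
    · apply hinjBE
      rw [← aeval_algebraMap_apply, map_zero]
      exact minpoly.aeval A θ
  choose θ P a b δ hfix hmonic hroot hbez hδ0 hno using key
  -- the roots `y` of `F` are made integral by the factor `ℓ`
  let R := {y : E // y ∈ (F.map (algebraMap A E)).roots.toFinset}
  have hFE0 : F.map (algebraMap A E) ≠ 0 := (Polynomial.map_ne_zero_iff hinjAE).2 hF0
  have hR : ∀ y : E, y ∈ (F.map (algebraMap A E)).roots.toFinset ↔ aeval y F = 0 := by
    intro y
    rw [Multiset.mem_toFinset, mem_roots hFE0, IsRoot.def, eval_map, aeval_def]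
  let z : R → B := fun y => ⟨ℓ • y.1, isIntegral_leadingCoeff_smul F y.1 ((hR _).1 y.2)⟩
  have hzval : ∀ y, algebraMap B E (z y) = algebraMap A E ℓ * y.1 := fun y => Algebra.smul_def _ _
  have hℓ0 : ℓ ≠ 0 := leadingCoeff_ne_zero.2 hF0
  have hℓE : algebraMap A E ℓ ≠ 0 := by rwa [Ne, map_eq_zero_iff _ hinjAE]
  have hz : C (algebraMap A B ℓ) ^ (Fintype.card R) * F.map (algebraMap A B)
      = C (algebraMap A B ℓ) * ∏ i, (C (algebraMap A B ℓ) * X - C (z i)) := by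
    apply map_injective _ hinjBE
    simp only [Polynomial.map_mul, Polynomial.map_pow, map_C, Polynomial.map_map,
      Polynomial.map_prod, Polynomial.map_sub, map_X, hzval,
      ← IsScalarTower.algebraMap_apply A B E, ← IsScalarTower.algebraMap_eq A B E]
    have h1 : ((F.map (algebraMap A E)).roots.map fun y => X - C y).prod
        = ∏ y : R, (X - C y.1) := by
      rw [Finset.prod_coe_sort (F.map (algebraMap A E)).roots.toFinset (fun y => X - C y)]
      rw [Finset.prod, Multiset.toFinset_val, hsep.dedup]
    have h0 : F.map (algebraMap A E) = C (algebraMap A E ℓ) * ∏ y : R, (X - C y.1) := by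
      rw [← h1, ← leadingCoeff_map_of_injective hinjAE]
      exact hsplit.eq_prod_roots
    have h2 : ∏ y : R, (C (algebraMap A E ℓ) * X - C (algebraMap A E ℓ * y.1))
        = C (algebraMap A E ℓ) ^ Fintype.card R * ∏ y : R, (X - C y.1) := by
      rw [← Finset.card_univ, ← Finset.prod_const, ← Finset.prod_mul_distrib]
      refine Finset.prod_congr rfl fun y _ => ?_
      rw [C_mul, mul_sub]
    rw [h2, mul_left_comm]
    exact congrArg _ h0
  -- distinct `σ` and `τ` that agree on all scaled roots modulo a prime force `c` into that prime
  have hsepG : ∀ σ τ : G, ∃ c : A, c ≠ 0 ∧ (σ ≠ τ → ∃ i, σ • z i - τ • z i ∣ algebraMap A B c) := by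
    intro σ τ
    by_cases hστ : σ = τ
    · exact ⟨1, one_ne_zero, fun h => absurd hστ h⟩
    obtain ⟨i, hi⟩ : ∃ i, σ • z i - τ • z i ≠ 0 := by
      by_contra hcon
      push Not at hcon
      refine hστ (hfaith σ τ fun x hx => ?_)
      have h := congrArg (algebraMap B E) (sub_eq_zero.1 (hcon ⟨x, (hR x).2 hx⟩))
      rw [hact, hact, hzval, map_mul, map_mul, IsScalarTower.algebraMap_apply A L E,
        AlgEquiv.commutes, AlgEquiv.commutes, ← IsScalarTower.algebraMap_apply A L E] at h
      exact mul_left_cancel₀ hℓE h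
    have halg : IsAlgebraic A (σ • z i - τ • z i) := (Algebra.IsIntegral.isIntegral _).isAlgebraic
    obtain ⟨c, hc, hdvd⟩ := halg.exists_nonzero_dvd (mem_nonZeroDivisors_of_ne_zero hi)
    exact ⟨c, hc, fun _ => ⟨i, hdvd⟩⟩
  choose c hc0 hc using hsepG
  refine ⟨{H : Subgroup G // H ≠ ⊤}, Fintype.ofFinite _, P, a, b, δ, ℓ * ∏ σ, ∏ τ, c σ τ, hmonic,
    hno, hδ0, hbez, mul_ne_zero hℓ0 (Finset.prod_ne_zero_iff.2 fun σ _ =>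
      Finset.prod_ne_zero_iff.2 fun τ _ => hc0 σ τ), ?_⟩
  intro 𝔭 _ _ hΔ hδ hP
  have hl : ℓ ∉ 𝔭 := fun h => hΔ (𝔭.mul_mem_right _ h)
  refine ⟨hl, ?_⟩
  obtain ⟨⟨Q, _, _⟩⟩ := 𝔭.nonempty_primesOver (S := B)
  refine card_le_card_gal_specialize (G := G) 𝔭 Q (stabilizer_eq_top 𝔭 Q fun H hH =>
    ⟨θ ⟨H, hH⟩, P ⟨H, hH⟩, a ⟨H, hH⟩, b ⟨H, hH⟩, δ ⟨H, hH⟩, hfix ⟨H, hH⟩, hmonic _, hroot _,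
      hbez _, hδ _, hP _⟩) F ℓ hl rfl z _ hz fun σ τ h => ?_
  by_contra hστ
  obtain ⟨i, hi⟩ := hc σ τ hστ
  have h1 : algebraMap A B (c σ τ) ∈ Q := Q.mem_of_dvd hi (h i)
  have h2 : c σ τ ∈ 𝔭 := (Ideal.mem_of_liesOver Q 𝔭 _).2 h1
  refine hΔ (𝔭.mul_mem_left _ (𝔭.mem_of_dvd ?_ h2))
  exact (Finset.dvd_prod_of_mem (fun τ => c σ τ) (Finset.mem_univ τ)).trans
    (Finset.dvd_prod_of_mem (fun σ => ∏ τ, c σ τ) (Finset.mem_univ σ))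

/-- The data of `exists_hilbert_data_aux` for the splitting field of `F` over the fraction field of
`A`, when the Galois group of `F` is the full symmetric group. -/
theorem exists_hilbert_data.{u} {A : Type u} [CommRing A] [IsDomain A] [IsIntegrallyClosed A]
    (F : A[X]) (hn : 1 ≤ F.natDegree)
    (hG : Nat.card (F.map (algebraMap A (FractionRing A))).Gal = F.natDegree.factorial) :
    ∃ (ι : Type u) (_ : Fintype ι) (P a b : ι → A[X]) (δ : ι → A) (Δ : A),
      (∀ i, (P i).Monic) ∧ (∀ i x y, y ≠ 0 → ((P i).scaleRoots y).eval x ≠ 0) ∧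
      (∀ i, δ i ≠ 0) ∧ (∀ i, a i * P i + b i * derivative (P i) = C (δ i)) ∧ Δ ≠ 0 ∧
      ∀ (𝔭 : Ideal A) [𝔭.IsPrime] [IsIntegrallyClosed (A ⧸ 𝔭)], Δ ∉ 𝔭 → (∀ i, δ i ∉ 𝔭) →
        (∀ i x, (P i).eval x ∉ 𝔭) → F.leadingCoeff ∉ 𝔭 ∧
        F.natDegree.factorial ≤ Nat.card (F.map
          ((algebraMap (A ⧸ 𝔭) (FractionRing (A ⧸ 𝔭))).comp (Ideal.Quotient.mk 𝔭))).Gal := by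
  let L := FractionRing A
  have hinj : Function.Injective (algebraMap A L) := IsFractionRing.injective A L
  let p : L[X] := F.map (algebraMap A L)
  have hdeg : p.natDegree = F.natDegree := natDegree_map_eq_of_injective hinj F
  have hsep : p.Separable := separable_of_card_gal p (hdeg ▸ hn) (hdeg ▸ hG)
  have : IsGalois L p.SplittingField := IsGalois.of_separable_splitting_field hsep
  have hF0 : F ≠ 0 := ne_zero_of_natDegree_gt hn
  have hmap : F.map (algebraMap A p.SplittingField) = p.map (algebraMap L p.SplittingField) := by
    rw [Polynomial.map_map, ← IsScalarTower.algebraMap_eq]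
  have h := exists_hilbert_data_aux (L := L) (E := p.SplittingField) F hF0
    (by rw [hmap]; exact SplittingField.splits p)
    (by rw [hmap]; exact nodup_roots hsep.map)
    (fun σ τ h => Polynomial.Gal.ext p fun x hx => h x (by
      have := (mem_rootSet'.1 hx).2
      rwa [aeval_map_algebraMap] at this))
  have hG' : Nat.card (p.SplittingField ≃ₐ[L] p.SplittingField) = F.natDegree.factorial := hG
  rwa [hG'] at h

end

/-! ### Specializing one variable -/

theorem card_gal_quotient_ker_le {A R K : Type*} [CommRing A] [CommRing R] [IsDomain R] [Field K]
    [Algebra R K] [IsFractionRing R K] (ev : A →+* R) (hev : Function.Surjective ev) (F : A[X])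
    [(RingHom.ker ev).IsPrime] :
    Nat.card (F.map ((algebraMap (A ⧸ RingHom.ker ev) (FractionRing (A ⧸ RingHom.ker ev))).comp
      (Ideal.Quotient.mk (RingHom.ker ev)))).Gal
      ≤ Nat.card (F.map ((algebraMap R K).comp ev)).Gal := by
  let e : A ⧸ RingHom.ker ev ≃+* R := RingHom.quotientKerEquivOfSurjective hev
  have he : ∀ x, e (Ideal.Quotient.mk (RingHom.ker ev) x) = ev x := fun x => rfl
  have hinj : Function.Injective ((algebraMap (A ⧸ RingHom.ker ev)
      (FractionRing (A ⧸ RingHom.ker ev))).comp e.symm.toRingHom) :=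
    (IsFractionRing.injective _ _).comp e.symm.injective
  let φ : K →+* FractionRing (A ⧸ RingHom.ker ev) := IsFractionRing.lift hinj
  have hcomp : (algebraMap (A ⧸ RingHom.ker ev) (FractionRing (A ⧸ RingHom.ker ev))).comp
      (Ideal.Quotient.mk (RingHom.ker ev)) = φ.comp ((algebraMap R K).comp ev) := by
    refine RingHom.ext fun x => ?_
    have h1 : φ (algebraMap R K (ev x)) = _ := IsFractionRing.lift_algebraMap hinj (ev x)
    have h2 : e.symm (ev x) = Ideal.Quotient.mk (RingHom.ker ev) x := by
      rw [← he, RingEquiv.symm_apply_apply]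
    simp only [RingHom.comp_apply]
    rw [h1]
    exact congrArg _ h2.symm
  rw [hcomp, ← Polynomial.map_map]
  exact card_gal_map_le φ _

/-- The Hilbert irreducibility step over `κ[x][U]`: the symmetric Galois group is kept by some
specialization `U ↦ u` with `u` in `k[x]` of large degree. -/
theorem exists_specialization {k κ : Type*} [Field k] [Field κ] [Algebra k κ] (F : κ[X][X][X])
    (hn : 1 ≤ F.natDegree)
    (hG : Nat.card (F.map (algebraMap κ[X][X] (FractionRing κ[X][X]))).Gal
      = F.natDegree.factorial) (d : ℕ) :
    ∃ u : k[X], d ≤ u.natDegree ∧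
      (F.map (evalRingHom (u.map (algebraMap k κ)))).natDegree = F.natDegree ∧
      Nat.card ((F.map (evalRingHom (u.map (algebraMap k κ)))).map
        (algebraMap κ[X] (RatFunc κ))).Gal = F.natDegree.factorial := by
  obtain ⟨ι, _, P, a, b, δ, Δ, hmonic, hno, hδ0, hbez, hΔ0, hmain⟩ := exists_hilbert_data F hn hG
  obtain ⟨u, hud, hΔ, hδ, hP⟩ :=
    exists_good_specialization (k := k) P a b δ hmonic hno hδ0 hbez Δ hΔ0 d
  let ev : κ[X][X] →+* κ[X] := evalRingHom (u.map (algebraMap k κ))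
  have hev : Function.Surjective ev := fun w => ⟨C w, by simp [ev]⟩
  let 𝔭 : Ideal κ[X][X] := RingHom.ker ev
  have : 𝔭.IsPrime := RingHom.ker_isPrime ev
  let e : κ[X][X] ⧸ 𝔭 ≃+* κ[X] := RingHom.quotientKerEquivOfSurjective hev
  have : IsIntegrallyClosed (κ[X][X] ⧸ 𝔭) := IsIntegrallyClosed.of_equiv e.symm
  obtain ⟨hl, hcard⟩ := hmain 𝔭 hΔ hδ (fun i x hx => by
    refine hP i (ev x) ?_
    have hx' : ev ((P i).eval x) = 0 := hx
    rw [eval_map]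
    rw [← eval₂_hom] at hx'
    exact hx')
  have hl' : ev F.leadingCoeff ≠ 0 := hl
  have hdeg : (F.map ev).natDegree = F.natDegree := natDegree_map_of_leadingCoeff_ne_zero ev hl'
  refine ⟨u, hud, hdeg, le_antisymm ?_ ?_⟩
  · refine (card_gal_le _).trans (Nat.factorial_le ?_)
    exact natDegree_map_le.trans natDegree_map_le
  · rw [Polynomial.map_map]
    exact hcard.trans (card_gal_quotient_ker_le ev hev F)

/-- The step `exists_specialization` with the variable `U` realized as an element `t` of an
extension of `κ` transcendental over `κ`, so that the hypothesis is about the larger field. -/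
theorem exists_specialization_of_transcendental {k κ κ' : Type*} [Field k] [Field κ] [Algebra k κ]
    [Field κ'] [Algebra κ κ'] (t : κ') (ht : Transcendental κ t) (F : κ[X][X][X])
    (hn : 1 ≤ F.natDegree)
    (hG : Nat.card ((F.map (eval₂RingHom (mapRingHom (algebraMap κ κ')) (C t))).map
      (algebraMap κ'[X] (RatFunc κ'))).Gal = F.natDegree.factorial) (d : ℕ) :
    ∃ u : k[X], d ≤ u.natDegree ∧
      (F.map (evalRingHom (u.map (algebraMap k κ)))).natDegree = F.natDegree ∧
      Nat.card ((F.map (evalRingHom (u.map (algebraMap k κ)))).map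
        (algebraMap κ[X] (RatFunc κ))).Gal = F.natDegree.factorial := by
  refine exists_specialization F hn (le_antisymm ?_ ?_) d
  · exact (card_gal_le _).trans (Nat.factorial_le natDegree_map_le)
  · let ψ : κ[X][X] →+* κ'[X] := eval₂RingHom (mapRingHom (algebraMap κ κ')) (C t)
    have hψ : Function.Injective ψ := by
      rw [injective_iff_map_eq_zero]
      intro w hw
      -- the coefficient of `x ^ i` of `ψ w` is the value at `t` of a polynomial over `κ`
      have hc : ∀ i, aeval t (∑ j ∈ w.support, C ((w.coeff j).coeff i) * X ^ j) = 0 := by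
        intro i
        have h1 : (ψ w).coeff i = 0 := by rw [hw, coeff_zero]
        rw [← h1]
        simp only [ψ, coe_eval₂RingHom, eval₂_eq_sum, Polynomial.sum, finsetSum_coeff, map_sum,
          map_mul, aeval_C, map_pow, aeval_X]
        refine Finset.sum_congr rfl fun j _ => ?_
        rw [← C_pow, coeff_mul_C, coe_mapRingHom, coeff_map]
      ext j i
      have h2 := (transcendental_iff.1 ht) _ (hc i)
      have h3 := congrArg (fun q => q.coeff j) h2
      simp only [finsetSum_coeff, coeff_C_mul_X_pow, coeff_zero] at h3
      rw [Finset.sum_ite_eq] at h3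
      by_cases hj : j ∈ w.support
      · simpa [hj] using h3
      · rw [notMem_support_iff.1 hj]; simp
    have hinj : Function.Injective ((algebraMap κ'[X] (RatFunc κ')).comp ψ) :=
      (RatFunc.algebraMap_injective κ').comp hψ
    let φ : FractionRing κ[X][X] →+* RatFunc κ' := IsFractionRing.lift hinj
    refine (hG.symm.le.trans_eq ?_).trans (card_gal_map_le φ _)
    rw [Polynomial.map_map, Polynomial.map_map]
    have hcomp : (algebraMap κ'[X] (RatFunc κ')).comp ψ
        = φ.comp (algebraMap κ[X][X] (FractionRing κ[X][X])) :=
      RingHom.ext fun x => (IsFractionRing.lift_algebraMap hinj x).symm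
    rw [← hcomp]

/-! ### Specializing all variables -/

/-- The induction step along the tower: the coordinate `m`, which is the transcendental constant
`t`, is replaced by a polynomial `u` over `k`, and the base descends to `κ`. -/
theorem tower_step {k κ κ' : Type*} [Field k] [Field κ] [Field κ'] [Algebra k κ] [Algebra κ κ']
    [Algebra k κ'] [IsScalarTower k κ κ'] {ℓ : ℕ} (F : (MvPolynomial (Fin ℓ) k)[X]) (n : ℕ)
    (hn : 1 ≤ n) (hF : F.natDegree = n) (m : Fin ℓ) (t : κ') (ht : Transcendental κ t)
    (y : Fin ℓ → κ[X]) (y' : Fin ℓ → κ'[X]) (hm : y' m = C t)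
    (hy : ∀ i, i ≠ m → y' i = (y i).map (algebraMap κ κ'))
    (hdeg : (F.map (MvPolynomial.aeval (R := k) y').toRingHom).natDegree = n)
    (hG : Nat.card ((F.map (MvPolynomial.aeval (R := k) y').toRingHom).map
      (algebraMap κ'[X] (RatFunc κ'))).Gal = n.factorial) (d : ℕ) :
    ∃ u : k[X], d ≤ u.natDegree ∧
      (F.map (MvPolynomial.aeval (R := k)
        (Function.update y m (u.map (algebraMap k κ)))).toRingHom).natDegree = n ∧
      Nat.card ((F.map (MvPolynomial.aeval (R := k)
        (Function.update y m (u.map (algebraMap k κ)))).toRingHom).map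
        (algebraMap κ[X] (RatFunc κ))).Gal = n.factorial := by
  classical
  let w : Fin ℓ → κ[X][X] := Function.update (fun i => C (y i)) m X
  let F' : κ[X][X][X] := F.map (MvPolynomial.aeval (R := k) w).toRingHom
  have h1 : F'.map (eval₂RingHom (mapRingHom (algebraMap κ κ')) (C t))
      = F.map (MvPolynomial.aeval (R := k) y').toRingHom := by
    rw [Polynomial.map_map]
    congr 1
    apply MvPolynomial.ringHom_ext
    · intro r
      simp [Polynomial.algebraMap_apply, IsScalarTower.algebraMap_apply k κ κ']
    · intro i
      by_cases hi : i = m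
      · subst hi; simp [w, hm]
      · simp [w, hi, hy i hi]
  have h2 : ∀ u : k[X], F'.map (evalRingHom (u.map (algebraMap k κ)))
      = F.map (MvPolynomial.aeval (R := k)
        (Function.update y m (u.map (algebraMap k κ)))).toRingHom := by
    intro u
    rw [Polynomial.map_map]
    congr 1
    apply MvPolynomial.ringHom_ext
    · intro r
      simp [Polynomial.algebraMap_apply]
    · intro i
      by_cases hi : i = m
      · subst hi; simp [w]
      · simp [w, hi]
  have hF' : F'.natDegree = n := by
    apply le_antisymm
    · rw [← hF]; exact natDegree_map_le
    · rw [← hdeg, ← h1]; exact natDegree_map_le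
  obtain ⟨u, hu⟩ := exists_specialization_of_transcendental (k := k) t ht F' (hF' ▸ hn)
    (by rw [h1, hF']; exact hG) d
  rw [h2, hF'] at hu
  exact ⟨u, hu⟩

open scoped IntermediateField.algebraAdjoinAdjoin in
theorem transcendental_adjoin_field {K Ω ι : Type*} [Field K] [Field Ω] [Algebra K Ω] {x : ι → Ω}
    (hx : AlgebraicIndependent K x) {s : Set ι} {i : ι} (hi : i ∉ s) :
    Transcendental (IntermediateField.adjoin K (x '' s)) (x i) := by
  have h := hx.transcendental_adjoin hi
  rintro halg
  exact h ((IsFractionRing.isAlgebraic_iff (Algebra.adjoin K (x '' s))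
    (IntermediateField.adjoin K (x '' s)) Ω).2 halg)

/-- The start of the induction: all the coordinates are constants in `κ[x]`, and the group over
`κ(x)` is still symmetric. -/
theorem tower_base {k κ Ω : Type*} [Field k] [Field κ] [Field Ω] [Algebra k κ] [Algebra κ Ω]
    [Algebra k Ω] {ℓ : ℕ} (F : (MvPolynomial (Fin ℓ) k)[X]) (n : ℕ) (hn : 1 ≤ n)
    (x' : Fin ℓ → κ) (x : Fin ℓ → Ω) (hx : ∀ i, algebraMap κ Ω (x' i) = x i)
    (htower : IsScalarTower k κ Ω) (y : Fin ℓ → κ[X]) (hy : ∀ i, y i = C (x' i))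
    (hdeg : (F.map (MvPolynomial.aeval (R := k) x).toRingHom).natDegree = n)
    (hG : Nat.card (F.map (MvPolynomial.aeval (R := k) x).toRingHom).Gal = n.factorial) :
    (F.map (MvPolynomial.aeval (R := k) y).toRingHom).natDegree = n ∧
      Nat.card ((F.map (MvPolynomial.aeval (R := k) y).toRingHom).map
        (algebraMap κ[X] (RatFunc κ))).Gal = n.factorial := by
  let p : κ[X] := F.map (MvPolynomial.aeval (R := k) x').toRingHom
  have h1 : F.map (MvPolynomial.aeval (R := k) y).toRingHom = p.map C := by
    rw [Polynomial.map_map]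
    congr 1
    apply MvPolynomial.ringHom_ext
    · intro r; simp [Polynomial.algebraMap_apply]
    · intro i; simp [hy]
  have h2 : F.map (MvPolynomial.aeval (R := k) x).toRingHom = p.map (algebraMap κ Ω) := by
    rw [Polynomial.map_map]
    congr 1
    apply MvPolynomial.ringHom_ext
    · intro r; simp [← IsScalarTower.algebraMap_apply k κ Ω]
    · intro i; simp [hx]
  rw [h2] at hdeg hG
  rw [natDegree_map] at hdeg
  have h3 : (p.map C).natDegree = n := by rw [natDegree_map_eq_of_injective C_injective, hdeg]
  rw [h1]
  refine ⟨h3, le_antisymm ?_ ?_⟩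
  · refine (card_gal_le _).trans (Nat.factorial_le ?_)
    exact natDegree_map_le.trans h3.le
  · rw [← hG]
    have hp0 : p ≠ 0 := ne_zero_of_natDegree_gt (hdeg ▸ hn : 0 < p.natDegree)
    have hC : (algebraMap κ[X] (RatFunc κ)).comp C = algebraMap κ (RatFunc κ) :=
      (IsScalarTower.algebraMap_eq κ κ[X] (RatFunc κ)).symm
    rw [Polynomial.map_map C, hC]
    exact (card_gal_map_le (algebraMap κ Ω) p).trans (card_gal_le_ratFunc p hp0)

/-- The end of the induction: all the coordinates come from `k[x]`, and the group over `K(x)` is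
symmetric because it is over the larger field `κ(x)`. -/
theorem tower_end {k K κ : Type*} [Field k] [Field K] [Field κ] [Algebra k K] [Algebra K κ]
    [Algebra k κ] {ℓ : ℕ} (F : (MvPolynomial (Fin ℓ) k)[X]) (n : ℕ) (hF : F.natDegree = n)
    (u : Fin ℓ → k[X]) (y : Fin ℓ → κ[X]) (hy : ∀ i, y i = (u i).map (algebraMap k κ))
    (htower : IsScalarTower k K κ)
    (hdeg : (F.map (MvPolynomial.aeval (R := k) y).toRingHom).natDegree = n)
    (hG : Nat.card ((F.map (MvPolynomial.aeval (R := k) y).toRingHom).map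
      (algebraMap κ[X] (RatFunc κ))).Gal = n.factorial) :
    (F.map (MvPolynomial.aeval (R := k) u).toRingHom).natDegree = n ∧
      Nat.card ((F.map (MvPolynomial.aeval (R := k) u).toRingHom).map
        ((algebraMap K[X] (RatFunc K)).comp (mapRingHom (algebraMap k K)))).Gal = n.factorial := by
  have hv0 : F.map (MvPolynomial.aeval (R := k) y).toRingHom
      = (F.map (MvPolynomial.aeval (R := k) u).toRingHom).map (mapRingHom (algebraMap k κ)) := by
    rw [Polynomial.map_map]
    congr 1
    apply MvPolynomial.ringHom_ext
    · intro r; simp [Polynomial.algebraMap_apply]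
    · intro i; simp [hy]
  refine ⟨?_, le_antisymm ?_ ?_⟩
  · apply le_antisymm
    · rw [← hF]; exact natDegree_map_le
    · rw [← hdeg, hv0]; exact natDegree_map_le
  · refine (card_gal_le _).trans (Nat.factorial_le ?_)
    exact (natDegree_map_le.trans natDegree_map_le).trans hF.le
  · have hinj : Function.Injective ((algebraMap κ[X] (RatFunc κ)).comp
        (mapRingHom (algebraMap K κ))) :=
      (RatFunc.algebraMap_injective _).comp (map_injective _ (algebraMap K κ).injective)
    let φ : RatFunc K →+* RatFunc κ := IsFractionRing.lift hinj
    have hcomp : (algebraMap κ[X] (RatFunc κ)).comp (mapRingHom (algebraMap k κ))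
        = φ.comp ((algebraMap K[X] (RatFunc K)).comp (mapRingHom (algebraMap k K))) := by
      refine RingHom.ext fun r => ?_
      have h1 : φ (algebraMap K[X] (RatFunc K) (r.map (algebraMap k K))) = _ :=
        IsFractionRing.lift_algebraMap hinj _
      simp only [RingHom.comp_apply, coe_mapRingHom] at h1 ⊢
      rw [h1, Polynomial.map_map, ← IsScalarTower.algebraMap_eq]
    rw [← hG, hv0, Polynomial.map_map, hcomp, ← Polynomial.map_map]
    exact card_gal_map_le φ _

/-- All the indeterminates are specialized, from the last to the first; the degree of the first
polynomial chosen, at position `ℓ - 1`, is at least `d`. -/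
theorem exists_tower {k K Ω : Type*} [Field k] [Field K] [Field Ω] [Algebra k K] [Algebra K Ω]
    [Algebra k Ω] [IsScalarTower k K Ω] {ℓ : ℕ} (hℓ : 1 ≤ ℓ) (x : Fin ℓ → Ω)
    (hx : AlgebraicIndependent K x) (F : (MvPolynomial (Fin ℓ) k)[X]) (n : ℕ)
    (hn : 1 ≤ n) (hF : F.natDegree = n)
    (hdeg : (F.map (MvPolynomial.aeval (R := k) x).toRingHom).natDegree = n)
    (hG : Nat.card (F.map (MvPolynomial.aeval (R := k) x).toRingHom).Gal = n.factorial) (d : ℕ) :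
    ∃ u : Fin ℓ → k[X], d ≤ (u ⟨ℓ - 1, by omega⟩).natDegree ∧
      (F.map (MvPolynomial.aeval (R := k) u).toRingHom).natDegree = n ∧
      Nat.card ((F.map (MvPolynomial.aeval (R := k) u).toRingHom).map
        ((algebraMap K[X] (RatFunc K)).comp (mapRingHom (algebraMap k K)))).Gal = n.factorial := by
  classical
  let S : ℕ → Set (Fin ℓ) := fun m => {i | i.1 < m}
  let M : ℕ → IntermediateField K Ω := fun m => IntermediateField.adjoin K (x '' S m)
  have hxM : ∀ m (i : Fin ℓ), i.1 < m → x i ∈ M m := fun m i hi =>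
    IntermediateField.subset_adjoin _ _ ⟨i, hi, rfl⟩
  let v : ∀ m, (Fin ℓ → k[X]) → Fin ℓ → (M m)[X] := fun m u i =>
    if h : i.1 < m then C ⟨x i, hxM m i h⟩ else (u i).map (algebraMap k (M m))
  -- after `j` steps, the last `j` coordinates are polynomials over `k` and the others are constants
  have main : ∀ j ≤ ℓ, ∃ u : Fin ℓ → k[X], (1 ≤ j → d ≤ (u ⟨ℓ - 1, by omega⟩).natDegree) ∧
      (F.map (MvPolynomial.aeval (R := k) (v (ℓ - j) u)).toRingHom).natDegree = n ∧
      Nat.card ((F.map (MvPolynomial.aeval (R := k) (v (ℓ - j) u)).toRingHom).map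
        (algebraMap (M (ℓ - j))[X] (RatFunc (M (ℓ - j))))).Gal = n.factorial := by
    intro j
    induction j with
    | zero =>
      intro _
      refine ⟨0, by simp, ?_⟩
      rw [Nat.sub_zero]
      exact tower_base F n hn (fun i => (⟨x i, hxM ℓ i i.2⟩ : M ℓ)) x (fun i => rfl)
        (IsScalarTower.of_algebraMap_eq fun _ => rfl) (v ℓ 0) (fun i => by simp [v]) hdeg hG
    | succ j ih =>
      intro hj
      obtain ⟨u, hu, hud, huG⟩ := ih (by omega)
      obtain ⟨m, hm⟩ : ∃ m, ℓ = m + 1 + j := ⟨ℓ - 1 - j, by omega⟩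
      have e1 : ℓ - j = m + 1 := by omega
      have e2 : ℓ - (j + 1) = m := by omega
      rw [e1] at hud huG
      rw [e2]
      have hle : M m ≤ M (m + 1) := IntermediateField.adjoin.mono _ _ _
        (Set.image_mono fun i (hi : i.1 < m) => Nat.lt_succ_of_lt hi)
      let : Algebra (M m) (M (m + 1)) := (IntermediateField.inclusion hle).toAlgebra
      have hval : ∀ r : M m, ((algebraMap (M m) (M (m + 1)) r : M (m + 1)) : Ω) = r := fun r => rfl
      have : IsScalarTower k (M m) (M (m + 1)) := IsScalarTower.of_algebraMap_eq fun r => rfl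
      have : IsScalarTower (M m) (M (m + 1)) Ω := IsScalarTower.of_algebraMap_eq fun r => rfl
      let mm : Fin ℓ := ⟨m, by omega⟩
      let t : M (m + 1) := ⟨x mm, hxM _ _ (Nat.lt_succ_self m)⟩
      have ht : Transcendental (M m) t := by
        have h := transcendental_adjoin_field hx (s := S m) (i := mm) (fun h => lt_irrefl m h)
        intro halg
        exact h (halg.algebraMap (A := Ω))
      obtain ⟨w, hwd, hw⟩ := tower_step F n hn hF mm t ht (v m u) (v (m + 1) u) (by simp [v, mm, t])
        (fun i hi => by
          have hi' : i.1 ≠ m := fun h => hi (Fin.ext h)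
          by_cases him : i.1 < m
          · have : i.1 < m + 1 := by omega
            simp only [v, dif_pos him, dif_pos this, map_C]
            rfl
          · have : ¬ i.1 < m + 1 := by omega
            simp only [v, dif_neg him, dif_neg this, Polynomial.map_map]
            rfl) hud huG d
      have hv : Function.update (v m u) mm (w.map (algebraMap k (M m)))
          = v m (Function.update u mm w) := by
        funext i
        by_cases hi : i = mm
        · subst hi; simp [v, mm]
        · simp [v, hi]
      rw [hv] at hw
      refine ⟨Function.update u mm w, fun _ => ?_, hw⟩
      by_cases hlast : (⟨ℓ - 1, by omega⟩ : Fin ℓ) = mm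
      · rw [hlast, Function.update_self]; exact hwd
      · rw [Function.update_of_ne hlast]
        refine hu ?_
        by_contra h0
        exact hlast (Fin.ext (by simp only [mm]; omega))
  obtain ⟨u, hu, hud, huG⟩ := main ℓ le_rfl
  rw [Nat.sub_self] at hud huG
  obtain ⟨h1, h2⟩ := tower_end (K := K) F n hF u (v 0 u) (fun i => by simp [v])
    (IsScalarTower.of_algebraMap_eq fun r =>
      Subtype.ext (IsScalarTower.algebraMap_apply k K Ω r)) hud huG
  exact ⟨u, hu hℓ, h1, h2⟩

/-! ### The theorem -/

theorem stmt_12 (k : Type*) [Field k] (ℓ : ℕ) (hℓ : 1 ≤ ℓ) (n : ℕ)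
    (F : Polynomial (MvPolynomial (Fin ℓ) k)) (hdeg : F.natDegree = n)
    (hGal : Nat.card (F.map
      ((algebraMap (MvPolynomial (Fin ℓ) (AlgebraicClosure k))
          (FractionRing (MvPolynomial (Fin ℓ) (AlgebraicClosure k)))).comp
        (MvPolynomial.map (algebraMap k (AlgebraicClosure k))))).Gal = n.factorial) :
    {u : Fin ℓ → Polynomial k |
      (F.map ((MvPolynomial.aeval u).toRingHom :
          MvPolynomial (Fin ℓ) k →+* Polynomial k)).natDegree = n ∧
      Nat.card ((F.map ((MvPolynomial.aeval u).toRingHom :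
          MvPolynomial (Fin ℓ) k →+* Polynomial k)).map
        ((algebraMap (Polynomial (AlgebraicClosure k)) (RatFunc (AlgebraicClosure k))).comp
          (Polynomial.mapRingHom (algebraMap k (AlgebraicClosure k))))).Gal
        = n.factorial}.Infinite := by
  classical
  rcases Nat.eq_zero_or_pos n with rfl | hn
  · -- a constant polynomial has degree `0` and trivial Galois group after any specialization
    have huniv : ∀ u : Fin ℓ → k[X], u ∈ {u : Fin ℓ → Polynomial k |
        (F.map ((MvPolynomial.aeval u).toRingHom :
          MvPolynomial (Fin ℓ) k →+* Polynomial k)).natDegree = 0 ∧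
        Nat.card ((F.map ((MvPolynomial.aeval u).toRingHom :
          MvPolynomial (Fin ℓ) k →+* Polynomial k)).map
        ((algebraMap (Polynomial (AlgebraicClosure k)) (RatFunc (AlgebraicClosure k))).comp
          (Polynomial.mapRingHom (algebraMap k (AlgebraicClosure k))))).Gal
        = Nat.factorial 0} := by
      intro u
      have h0 : (F.map ((MvPolynomial.aeval u).toRingHom :
          MvPolynomial (Fin ℓ) k →+* Polynomial k)).natDegree = 0 :=
        Nat.le_zero.1 (natDegree_map_le.trans hdeg.le)
      refine ⟨h0, le_antisymm ?_ Nat.card_pos⟩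
      exact (card_gal_le _).trans (Nat.factorial_le (natDegree_map_le.trans h0.le))
    have : Nonempty (Fin ℓ) := ⟨⟨0, hℓ⟩⟩
    have hinf : Infinite (Fin ℓ → k[X]) := Pi.infinite_of_right
    exact (Set.eq_univ_of_forall huniv) ▸ Set.infinite_univ
  · let K := AlgebraicClosure k
    let Ω := FractionRing (MvPolynomial (Fin ℓ) K)
    let x : Fin ℓ → Ω := fun i => algebraMap (MvPolynomial (Fin ℓ) K) Ω (MvPolynomial.X i)
    have hx : AlgebraicIndependent K x :=
      (MvPolynomial.algebraicIndependent_X (Fin ℓ) K).map'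
        (f := IsScalarTower.toAlgHom K (MvPolynomial (Fin ℓ) K) Ω) (IsFractionRing.injective _ _)
    have hcomp : (algebraMap (MvPolynomial (Fin ℓ) K) Ω).comp
        (MvPolynomial.map (algebraMap k K)) = (MvPolynomial.aeval (R := k) x).toRingHom := by
      apply MvPolynomial.ringHom_ext
      · intro r
        simp only [RingHom.comp_apply, MvPolynomial.map_C, AlgHom.toRingHom_eq_coe,
          RingHom.coe_coe, MvPolynomial.aeval_C, IsScalarTower.algebraMap_apply k K Ω]
        exact (IsScalarTower.algebraMap_apply K (MvPolynomial (Fin ℓ) K) Ω _).symm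
      · intro i
        simp [x]
    have hinj : Function.Injective ((algebraMap (MvPolynomial (Fin ℓ) K) Ω).comp
        (MvPolynomial.map (algebraMap k K))) :=
      (IsFractionRing.injective _ _).comp
        (MvPolynomial.map_injective _ (algebraMap k K).injective)
    have hdegx : (F.map (MvPolynomial.aeval (R := k) x).toRingHom).natDegree = n := by
      rw [← hcomp, natDegree_map_eq_of_injective hinj, hdeg]
    have hGx : Nat.card (F.map (MvPolynomial.aeval (R := k) x).toRingHom).Gal = n.factorial := by
      rw [← hcomp]; exact hGal
    intro hfin
    -- a finite set of tuples has bounded degree in the last coordinate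
    obtain ⟨b, hb⟩ := (hfin.image fun u => (u ⟨ℓ - 1, by omega⟩).natDegree).bddAbove
    obtain ⟨u, hud, hu⟩ := exists_tower (K := K) hℓ x hx F n hn hdeg hdegx hGx (b + 1)
    have := hb ⟨u, hu, rfl⟩
    simp only at this
    omega
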